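/- arXiv:2406.06106 — 7 statements merged into one kernel-verified Lean document; each statement's English description precedes it below -/
import Mathlib

section
/- Let μ be a probability measure on ℝ that is absolutely continuous with respect to Lebesgue measure with density w, and suppose there exist a constant C > 0 and an exponent γ ∈ (0, 1/2) such that w(x) ≥ C·exp(−|x|^γ) for almost every x ∈ (−∞, 1]. Then there exists ε > 0 such that for every real polynomial q, ∫ |q(x) − sgn(x)| dμ(x) > ε. -/
open MeasureTheory ProbabilityTheory

/-- The sign function: `1` if `0 ≤ t`, `-1` otherwise. -/
noncomputable def sgn (t : ℝ) : ℝ := if 0 ≤ t then 1 else -1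

/-!
Duality: if `F` has integrable products with polynomials, is orthogonal to all of them, and
`|F| dx ≤ μ`, then for every polynomial `q`
`∫ |q - sgn| dμ ≥ |∫ (q - sgn) F dx| = |∫ sgn F dx|`, a bound independent of `q`.

Such an `F` comes from Stieltjes' indeterminate moment problem. Fix `γ < a < 1 / 2`. The formula
`∫₀^∞ y ^ n exp (-c y ^ a) dy = c ^ (-(n + 1) / a) Γ((n + 1) / a) / a` holds for `c > 0` and extends
analytically to `Re c > 0`. At `c = exp (-iπa)` the right-hand side is real, so
`S y = Im exp (-c y ^ a)` has vanishing moments on `(0, ∞)`. Since `|S y| ≤ exp (-cos (πa) y ^ a)`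
and `γ < a`, a small multiple of `F x = S (d - x)` on `(-∞, d)` satisfies `|F| dx ≤ μ`. Finally
`∫ sgn F = ∫ (sgn + 1) F = 2 ∫₀^d S`, which is positive for `0 < d ≤ 1` because `S > 0` on `(0, 1]`.
-/

section

open Set Filter Topology Real Complex

lemma withDensity_restrict_le_withDensity {α : Type*} [MeasurableSpace α] {ν : Measure α}
    {s : Set α} (hs : MeasurableSet s) {f g : α → ENNReal} (hfg : ∀ᵐ x ∂ν, x ∈ s → f x ≤ g x) :
    (ν.restrict s).withDensity f ≤ ν.withDensity g :=
  calc (ν.restrict s).withDensity f ≤ (ν.restrict s).withDensity g :=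
        withDensity_mono ((ae_restrict_iff' hs).2 hfg)
    _ = (ν.withDensity g).restrict s := (restrict_withDensity hs g).symm
    _ ≤ ν.withDensity g := Measure.restrict_le_self

lemma enorm_integral_mul_le_lintegral_enorm_sub_of_orthogonal {α 𝕜 : Type*}
    [MeasurableSpace α] [RCLike 𝕜]
    {μ ν : Measure α} {F f p : α → 𝕜} (hF : AEStronglyMeasurable F ν)
    (hFμ : ν.withDensity (fun x => ‖F x‖ₑ) ≤ μ) (hf : Integrable (fun x => f x * F x) ν)
    (hp : Integrable (fun x => p x * F x) ν) (hpF : ∫ x, p x * F x ∂ν = 0) :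
    ‖∫ x, f x * F x ∂ν‖ₑ ≤ ∫⁻ x, ‖p x - f x‖ₑ ∂μ := by
  calc ‖∫ x, f x * F x ∂ν‖ₑ = ‖∫ x, (p x - f x) * F x ∂ν‖ₑ := by
        simp only [sub_mul, integral_sub hp hf, hpF, zero_sub, enorm_neg]
    _ ≤ ∫⁻ x, ‖F x‖ₑ * ‖p x - f x‖ₑ ∂ν := by
        simpa only [enorm_mul, mul_comm] using
          enorm_integral_le_lintegral_enorm (μ := ν) fun x => (p x - f x) * F x
    _ = ∫⁻ x, ‖p x - f x‖ₑ ∂ν.withDensity fun x => ‖F x‖ₑ :=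
        (lintegral_withDensity_eq_lintegral_mul_non_measurable₀ ν hF.enorm (by simp) _).symm
    _ ≤ ∫⁻ x, ‖p x - f x‖ₑ ∂μ := lintegral_mono' hFμ le_rfl

lemma exists_pos_forall_lt_lintegral_abs_eval_sub_of_orthogonal {μ ν : Measure ℝ} {F f : ℝ → ℝ}
    (hFμ : ν.withDensity (fun x => ‖F x‖ₑ) ≤ μ)
    (hF : ∀ q : Polynomial ℝ, Integrable (fun x => q.eval x * F x) ν)
    (hF₀ : ∀ q : Polynomial ℝ, ∫ x, q.eval x * F x ∂ν = 0)
    (hf : Integrable (fun x => f x * F x) ν) (hf₀ : ∫ x, f x * F x ∂ν ≠ 0) :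
    ∃ ε > 0, ∀ q : Polynomial ℝ,
      ENNReal.ofReal ε < ∫⁻ x, ENNReal.ofReal |q.eval x - f x| ∂μ := by
  have F_aesm : AEStronglyMeasurable F ν := by simpa using (hF 1).aestronglyMeasurable
  set J := ∫ x, f x * F x ∂ν
  have hJ : 0 < |J| := abs_pos.2 hf₀
  refine ⟨|J| / 2, half_pos hJ, fun q => ?_⟩
  calc ENNReal.ofReal (|J| / 2) < ENNReal.ofReal |J| :=
        (ENNReal.ofReal_lt_ofReal_iff hJ).2 (half_lt_self hJ)
    _ = ‖J‖ₑ := (Real.enorm_eq_ofReal_abs J).symm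
    _ ≤ ∫⁻ x, ‖q.eval x - f x‖ₑ ∂μ :=
        enorm_integral_mul_le_lintegral_enorm_sub_of_orthogonal F_aesm hFμ hf (hF q) (hF₀ q)
    _ = ∫⁻ x, ENNReal.ofReal |q.eval x - f x| ∂μ := by simp only [Real.enorm_eq_ofReal_abs]

section Moments

variable {ν : Measure ℝ} {F : ℝ → ℝ}

lemma eval_mul_eq_sum_coeff_mul_pow_mul (P : Polynomial ℝ) (F : ℝ → ℝ) (x : ℝ) :
    P.eval x * F x = ∑ n ∈ Finset.range (P.natDegree + 1), P.coeff n * (x ^ n * F x) := by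
  simp only [P.eval_eq_sum_range, Finset.sum_mul, mul_assoc]

lemma integrable_eval_mul (hF : ∀ n : ℕ, Integrable (fun x => x ^ n * F x) ν)
    (P : Polynomial ℝ) : Integrable (fun x => P.eval x * F x) ν := by
  simp only [eval_mul_eq_sum_coeff_mul_pow_mul]
  exact integrable_finsetSum _ fun n _ => (hF n).const_mul _

lemma integral_eval_mul_eq_zero (hF : ∀ n : ℕ, Integrable (fun x => x ^ n * F x) ν)
    (hF₀ : ∀ n : ℕ, ∫ x, x ^ n * F x ∂ν = 0) (P : Polynomial ℝ) :
    ∫ x, P.eval x * F x ∂ν = 0 := by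
  simp only [eval_mul_eq_sum_coeff_mul_pow_mul]
  rw [integral_finsetSum _ fun n _ => (hF n).const_mul _]
  simp only [integral_const_mul, hF₀, mul_zero, Finset.sum_const_zero]

end Moments

section Sgn

variable {ν : Measure ℝ} {F : ℝ → ℝ}

lemma sgn_mul_eq_two_mul_indicator_sub (F : ℝ → ℝ) (x : ℝ) :
    sgn x * F x = 2 * (Ici 0).indicator F x - F x := by
  by_cases hx : 0 ≤ x
  · rw [sgn, if_pos hx, indicator_of_mem (mem_Ici.2 hx)]
    ring
  · rw [sgn, if_neg hx, indicator_of_notMem (by simpa using hx)]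
    ring

lemma integrable_sgn_mul (hF : Integrable F ν) : Integrable (fun x => sgn x * F x) ν := by
  simp only [sgn_mul_eq_two_mul_indicator_sub]
  exact ((hF.indicator measurableSet_Ici).const_mul 2).sub hF

lemma integral_sgn_mul (hF : Integrable F ν) :
    ∫ x, sgn x * F x ∂ν = 2 * ∫ x in Ici 0, F x ∂ν - ∫ x, F x ∂ν := by
  simp only [sgn_mul_eq_two_mul_indicator_sub]
  rw [integral_sub ((hF.indicator measurableSet_Ici).const_mul 2) hF, integral_const_mul,
    integral_indicator measurableSet_Ici]

end Sgn

lemma exists_rpow_le_add_mul_rpow {γ a k : ℝ} (hγ : 0 ≤ γ) (hγa : γ < a) (hk : 0 < k) :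
    ∃ K : ℝ, ∀ y : ℝ, 0 < y → y ^ γ ≤ K + k * y ^ a := by
  -- `y ^ γ` and `k * y ^ a` cross at `y = k ^ (γ - a)⁻¹`.
  set Y : ℝ := k ^ (γ - a)⁻¹
  have hY : 0 < Y := by positivity
  refine ⟨Y ^ γ, fun y hy => ?_⟩
  rcases le_total y Y with hyY | hYy
  · have : y ^ γ ≤ Y ^ γ := rpow_le_rpow hy.le hyY hγ
    have : 0 ≤ k * y ^ a := by positivity
    linarith
  · calc y ^ γ = y ^ (γ - a) * y ^ a := by rw [← rpow_add hy, sub_add_cancel]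
      _ ≤ Y ^ (γ - a) * y ^ a := by
        gcongr ?_ * _
        exact rpow_le_rpow_of_nonpos hY hYy (by linarith)
      _ = k * y ^ a := by rw [rpow_inv_rpow hk.le (by linarith)]
      _ ≤ Y ^ γ + k * y ^ a := le_add_of_nonneg_left (by positivity)

section GammaIntegral

variable {p q : ℝ} {b : ℂ}

lemma eqOn_of_preconnected_of_eventually_ofReal_eq {f g : ℂ → ℂ} {U : Set ℂ} {x₀ : ℝ}
    (hf : AnalyticOnNhd ℂ f U) (hg : AnalyticOnNhd ℂ g U) (hU : IsPreconnected U)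
    (hx₀ : (x₀ : ℂ) ∈ U) (hfg : ∀ᶠ x : ℝ in 𝓝 x₀, f x = g x) : EqOn f g U := by
  refine hf.eqOn_of_preconnected_of_frequently_eq hg hU hx₀ ?_
  have ofReal_tendsto : Tendsto ((↑) : ℝ → ℂ) (𝓝[≠] x₀) (𝓝[≠] (x₀ : ℂ)) :=
    continuous_ofReal.continuousAt.continuousWithinAt.tendsto_nhdsWithin
      fun _ hx => ofReal_injective.ne hx
  exact ofReal_tendsto.frequently (hfg.filter_mono nhdsWithin_le_nhds).frequently

/-- The measure `x ^ q dx` on `(0, ∞)`, which makes the integrals of `x ^ q * exp (z * x ^ p)` over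
`(0, ∞)` into the moment generating function `complexMGF (· ^ p)` of a measure. -/
noncomputable def rpowMeasure (q : ℝ) : Measure ℝ :=
  (volume.restrict (Ioi 0)).withDensity fun x => ENNReal.ofReal (x ^ q)

lemma complexMGF_rpowMeasure (p q : ℝ) (z : ℂ) :
    complexMGF (· ^ p) (rpowMeasure q) z =
      ∫ x in Ioi (0 : ℝ), ((x ^ q : ℝ) : ℂ) * cexp (z * (x ^ p : ℝ)) := by
  rw [complexMGF, rpowMeasure, integral_withDensity_eq_integral_toReal_smul (by fun_prop) (by simp)]
  refine setIntegral_congr_fun measurableSet_Ioi fun x (hx : 0 < x) => ?_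
  rw [ENNReal.toReal_ofReal (by positivity), real_smul]

lemma Iio_zero_subset_integrableExpSet_rpowMeasure (hp : 0 < p) (hq : -1 < q) :
    Iio 0 ⊆ integrableExpSet (· ^ p) (rpowMeasure q) := by
  intro t (ht : t < 0)
  rw [integrableExpSet, mem_ofPred_eq, rpowMeasure,
    integrable_withDensity_iff_integrable_smul' (by fun_prop) (by simp)]
  refine (integrableOn_rpow_mul_exp_neg_mul_rpow hq hp (neg_pos.2 ht)).congr_fun
    (fun x (hx : 0 < x) => ?_) measurableSet_Ioi
  rw [neg_neg, ENNReal.toReal_ofReal (by positivity), smul_eq_mul]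

lemma analyticOnNhd_complexMGF_rpowMeasure (hp : 0 < p) (hq : -1 < q) :
    AnalyticOnNhd ℂ (complexMGF (· ^ p) (rpowMeasure q)) {z | z.re < 0} :=
  analyticOnNhd_complexMGF.mono fun _ hz =>
    interior_maximal (Iio_zero_subset_integrableExpSet_rpowMeasure hp hq) isOpen_Iio hz

lemma integral_rpow_mul_cexp_neg_mul_rpow (hp : 0 < p) (hq : -1 < q) (hb : 0 < b.re) :
    ∫ x in Ioi (0 : ℝ), ((x ^ q : ℝ) : ℂ) * cexp (-b * (x ^ p : ℝ)) =
      b ^ ((-(q + 1) / p : ℝ) : ℂ) * ((1 / p * Real.Gamma ((q + 1) / p) : ℝ) : ℂ) := by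
  have analytic_rhs : AnalyticOnNhd ℂ
      (fun z : ℂ => (-z) ^ ((-(q + 1) / p : ℝ) : ℂ) *
        ((1 / p * Real.Gamma ((q + 1) / p) : ℝ) : ℂ)) {z | z.re < 0} := fun z hz =>
    (analyticAt_id.neg.cpow analyticAt_const (.inl (by simpa using hz))).mul analyticAt_const
  have hconn : IsPreconnected {z : ℂ | z.re < 0} := (convex_halfSpace_re_lt 0).isPreconnected
  have eq_on_reals : ∀ᶠ t : ℝ in 𝓝 (-1), complexMGF (· ^ p) (rpowMeasure q) t =
      (-t : ℂ) ^ ((-(q + 1) / p : ℝ) : ℂ) * ((1 / p * Real.Gamma ((q + 1) / p) : ℝ) : ℂ) := by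
    filter_upwards [Iio_mem_nhds neg_one_lt_zero] with t (ht : t < 0)
    have real_formula := integral_rpow_mul_exp_neg_mul_rpow hp hq (neg_pos.2 ht)
    rw [complexMGF_rpowMeasure, ← ofReal_neg, ← ofReal_cpow (neg_pos.2 ht).le, ← ofReal_mul,
      ← mul_assoc, ← real_formula, ← integral_complex_ofReal]
    simp only [neg_neg, ofReal_mul, ofReal_exp]
  have eq_at_neg := eqOn_of_preconnected_of_eventually_ofReal_eq
    (analyticOnNhd_complexMGF_rpowMeasure hp hq) analytic_rhs hconn (by simp) eq_on_reals
    (show (-b).re < 0 by simpa using hb)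
  simpa only [complexMGF_rpowMeasure, neg_neg] using eq_at_neg

lemma integrableOn_rpow_mul_cexp_neg_mul_rpow (hp : 0 < p) (hq : -1 < q) (hb : 0 < b.re) :
    IntegrableOn (fun x : ℝ => ((x ^ q : ℝ) : ℂ) * cexp (-b * (x ^ p : ℝ))) (Ioi 0) := by
  refine (integrableOn_rpow_mul_exp_neg_mul_rpow hq hp hb).mono'
    (Measurable.aestronglyMeasurable (by fun_prop)) ?_
  filter_upwards [self_mem_ae_restrict measurableSet_Ioi] with x (hx : 0 < x)
  rw [norm_mul, norm_exp, Complex.norm_of_nonneg (by positivity), re_mul_ofReal, neg_re]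

end GammaIntegral

/-- Stieltjes' function `Im exp (-exp (-iπa) y ^ a)`. For `0 < a < 1 / 2` all its moments on
`(0, ∞)` vanish. -/
noncomputable def stieltjesFun (a y : ℝ) : ℝ :=
  rexp (-Real.cos (π * a) * y ^ a) * Real.sin (Real.sin (π * a) * y ^ a)

section Stieltjes

variable {a : ℝ}

lemma abs_stieltjesFun_le (a y : ℝ) : |stieltjesFun a y| ≤ rexp (-Real.cos (π * a) * y ^ a) := by
  rw [stieltjesFun, abs_mul, Real.abs_exp]
  exact mul_le_of_le_one_right (Real.exp_pos _).le (abs_sin_le_one _)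

lemma rpow_mul_stieltjesFun_eq_im (q a y : ℝ) :
    y ^ q * stieltjesFun a y =
      (((y ^ q : ℝ) : ℂ) * cexp (-cexp ((-(π * a) : ℝ) * I) * (y ^ a : ℝ))).im := by
  rw [stieltjesFun, im_ofReal_mul, exp_im, re_mul_ofReal, im_mul_ofReal, neg_re, neg_im,
    exp_ofReal_mul_I_re, exp_ofReal_mul_I_im, Real.cos_neg, Real.sin_neg, neg_neg]

lemma cos_pi_mul_pos (ha₀ : 0 < a) (ha : a < 1 / 2) : 0 < Real.cos (π * a) :=
  cos_pos_of_mem_Ioo ⟨by nlinarith [pi_pos], by nlinarith [pi_pos]⟩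

lemma re_cexp_neg_pi_mul_pos (ha₀ : 0 < a) (ha : a < 1 / 2) :
    0 < (cexp ((-(π * a) : ℝ) * I)).re := by
  rw [exp_ofReal_mul_I_re, Real.cos_neg]
  exact cos_pi_mul_pos ha₀ ha

lemma integrableOn_rpow_mul_stieltjesFun (ha₀ : 0 < a) (ha : a < 1 / 2) {q : ℝ} (hq : -1 < q) :
    IntegrableOn (fun y => y ^ q * stieltjesFun a y) (Ioi 0) := by
  simp only [rpow_mul_stieltjesFun_eq_im]
  exact (integrableOn_rpow_mul_cexp_neg_mul_rpow ha₀ hq (re_cexp_neg_pi_mul_pos ha₀ ha)).im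

lemma cexp_neg_pi_mul_cpow (ha₀ : 0 < a) (ha : a < 1) (q : ℝ) :
    cexp ((-(π * a) : ℝ) * I) ^ ((-(q + 1) / a : ℝ) : ℂ) = cexp ((π * (q + 1) : ℝ) * I) := by
  have log_eq : Complex.log (cexp ((-(π * a) : ℝ) * I)) = (-(π * a) : ℝ) * I := by
    apply Complex.log_exp <;> rw [im_ofReal_mul, I_im, mul_one] <;> nlinarith [pi_pos]
  rw [cpow_def_of_ne_zero (exp_ne_zero _), log_eq, mul_right_comm, ← ofReal_mul]
  congr 3
  field_simp

lemma integral_rpow_mul_stieltjesFun (ha₀ : 0 < a) (ha : a < 1 / 2) {q : ℝ} (hq : -1 < q) :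
    ∫ y in Ioi 0, y ^ q * stieltjesFun a y =
      Real.sin (π * (q + 1)) * (1 / a * Real.Gamma ((q + 1) / a)) := by
  have hb := re_cexp_neg_pi_mul_pos ha₀ ha
  simp only [rpow_mul_stieltjesFun_eq_im]
  refine (integral_im (integrableOn_rpow_mul_cexp_neg_mul_rpow ha₀ hq hb)).trans ?_
  rw [integral_rpow_mul_cexp_neg_mul_rpow ha₀ hq hb, cexp_neg_pi_mul_cpow ha₀ (by linarith),
    RCLike.im_to_complex, im_mul_ofReal, exp_ofReal_mul_I_im]

lemma integrableOn_pow_mul_stieltjesFun (ha₀ : 0 < a) (ha : a < 1 / 2) (n : ℕ) :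
    IntegrableOn (fun y => y ^ n * stieltjesFun a y) (Ioi 0) := by
  simpa only [rpow_natCast] using
    integrableOn_rpow_mul_stieltjesFun ha₀ ha (neg_one_lt_zero.trans_le n.cast_nonneg)

lemma integral_pow_mul_stieltjesFun_eq_zero (ha₀ : 0 < a) (ha : a < 1 / 2) (n : ℕ) :
    ∫ y in Ioi 0, y ^ n * stieltjesFun a y = 0 := by
  have sin_eq_zero : Real.sin (π * (n + 1)) = 0 := by
    rw [mul_comm]
    exact_mod_cast Real.sin_nat_mul_pi (n + 1)
  simpa only [rpow_natCast, sin_eq_zero, zero_mul] using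
    integral_rpow_mul_stieltjesFun ha₀ ha (neg_one_lt_zero.trans_le n.cast_nonneg)

lemma stieltjesFun_pos (ha₀ : 0 < a) (ha : a < 1) {y : ℝ} (hy₀ : 0 < y) (hy : y ≤ 1) :
    0 < stieltjesFun a y := by
  have sin_pos : 0 < Real.sin (π * a) :=
    sin_pos_of_pos_of_lt_pi (by positivity) (mul_lt_of_lt_one_right pi_pos ha)
  have arg_le_one : Real.sin (π * a) * y ^ a ≤ 1 :=
    mul_le_one₀ (sin_le_one _) (by positivity) (rpow_le_one hy₀.le hy ha₀.le)
  exact mul_pos (Real.exp_pos _)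
    (sin_pos_of_pos_of_lt_pi (by positivity) (arg_le_one.trans_lt (by linarith [pi_gt_three])))

lemma exists_abs_stieltjesFun_sub_le {γ : ℝ} (hγ : 0 ≤ γ) (hγa : γ < a) (ha : a < 1 / 2) (d : ℝ) :
    ∃ M > 0, ∀ x < d, |stieltjesFun a (d - x)| ≤ M * rexp (-(|x| ^ γ)) := by
  obtain ⟨K, hK⟩ :=
    exists_rpow_le_add_mul_rpow hγ hγa (cos_pi_mul_pos (hγ.trans_lt hγa) ha)
  refine ⟨rexp (|d| ^ γ + K), Real.exp_pos _, fun x hx => (abs_stieltjesFun_le _ _).trans ?_⟩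
  have hdx : 0 < d - x := sub_pos.2 hx
  have abs_rpow_le : |x| ^ γ ≤ |d| ^ γ + (d - x) ^ γ := calc
    |x| ^ γ ≤ (|d| + (d - x)) ^ γ :=
      rpow_le_rpow (abs_nonneg x) (by grind) hγ
    _ ≤ |d| ^ γ + (d - x) ^ γ :=
      rpow_add_le_add_rpow (abs_nonneg d) hdx.le hγ (by linarith)
  rw [← Real.exp_add, Real.exp_le_exp]
  linarith [hK _ hdx]

end Stieltjes

section Reflection

variable {a : ℝ}

lemma measurePreserving_sub_left_Iio_Ioi (d : ℝ) :
    MeasurePreserving (d - ·) (volume.restrict (Iio d)) (volume.restrict (Ioi 0)) := by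
  have := (volume.measurePreserving_sub_left d).restrict_preimage (measurableSet_Ioi (a := 0))
  rwa [preimage_const_sub_Ioi, sub_zero] at this

lemma eval_mul_stieltjesFun_sub_eq (P : Polynomial ℝ) (a d x : ℝ) :
    P.eval x * stieltjesFun a (d - x) =
      (P.comp (.C d - .X)).eval (d - x) * stieltjesFun a (d - x) := by
  simp

lemma integrableOn_eval_mul_stieltjesFun_sub (ha₀ : 0 < a) (ha : a < 1 / 2) (d : ℝ)
    (P : Polynomial ℝ) :
    IntegrableOn (fun x => P.eval x * stieltjesFun a (d - x)) (Iio d) := by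
  simp only [eval_mul_stieltjesFun_sub_eq P]
  exact (measurePreserving_sub_left_Iio_Ioi d).integrable_comp_of_integrable
    (integrable_eval_mul (integrableOn_pow_mul_stieltjesFun ha₀ ha) _)

lemma setIntegral_eval_mul_stieltjesFun_sub_eq_zero (ha₀ : 0 < a) (ha : a < 1 / 2) (d : ℝ)
    (P : Polynomial ℝ) :
    ∫ x in Iio d, P.eval x * stieltjesFun a (d - x) = 0 := by
  simp only [eval_mul_stieltjesFun_sub_eq P]
  rw [(measurePreserving_sub_left_Iio_Ioi d).integral_comp (measurableEmbedding_subLeft d)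
    fun y => (P.comp (.C d - .X)).eval y * stieltjesFun a y]
  exact integral_eval_mul_eq_zero (integrableOn_pow_mul_stieltjesFun ha₀ ha)
    (integral_pow_mul_stieltjesFun_eq_zero ha₀ ha) _

lemma integrableOn_stieltjesFun_sub (ha₀ : 0 < a) (ha : a < 1 / 2) (d : ℝ) :
    IntegrableOn (fun x => stieltjesFun a (d - x)) (Iio d) := by
  simpa using integrableOn_eval_mul_stieltjesFun_sub ha₀ ha d 1

lemma setIntegral_stieltjesFun_sub_eq_zero (ha₀ : 0 < a) (ha : a < 1 / 2) (d : ℝ) :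
    ∫ x in Iio d, stieltjesFun a (d - x) = 0 := by
  simpa using setIntegral_eval_mul_stieltjesFun_sub_eq_zero ha₀ ha d 1

end Reflection

lemma setIntegral_sgn_mul_stieltjesFun_sub_pos {a d : ℝ} (ha₀ : 0 < a) (ha : a < 1 / 2)
    (hd₀ : 0 < d) (hd : d ≤ 1) : 0 < ∫ x in Iio d, sgn x * stieltjesFun a (d - x) := by
  have hint := integrableOn_stieltjesFun_sub ha₀ ha d
  have interval_integral_pos : 0 < ∫ x in 0..d, stieltjesFun a (d - x) := by
    refine intervalIntegral.intervalIntegral_pos_of_pos_on ?_ (fun x hx => ?_) hd₀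
    · rw [intervalIntegrable_iff_integrableOn_Ioo_of_le hd₀.le]
      exact hint.mono_set Ioo_subset_Iio_self
    · exact stieltjesFun_pos ha₀ (by linarith) (sub_pos.2 hx.2) (by linarith [hx.1])
  rw [integral_sgn_mul hint, setIntegral_stieltjesFun_sub_eq_zero ha₀ ha, sub_zero,
    Measure.restrict_restrict measurableSet_Ici, Ici_inter_Iio, integral_Ico_eq_integral_Ioc,
    ← intervalIntegral.integral_of_le hd₀.le]
  exact mul_pos two_pos interval_integral_pos

lemma exists_withDensity_mul_stieltjesFun_sub_le {γ a b C d : ℝ} (hγ : 0 ≤ γ) (hγa : γ < a)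
    (ha : a < 1 / 2) (hC : 0 < C) (hdb : d ≤ b) :
    ∃ κ > 0, (volume.restrict (Iio d)).withDensity (fun x => ‖κ * stieltjesFun a (d - x)‖ₑ) ≤
      (volume.restrict (Iic b)).withDensity fun x => ENNReal.ofReal (C * rexp (-(|x| ^ γ))) := by
  obtain ⟨M, hM, hbound⟩ := exists_abs_stieltjesFun_sub_le hγ hγa ha d
  refine ⟨C / M, by positivity, ?_⟩
  rw [← Measure.restrict_restrict_of_subset (Iio_subset_Iic_self.trans (Iic_subset_Iic.2 hdb))]
  refine withDensity_restrict_le_withDensity measurableSet_Iio (.of_forall fun x hx => ?_)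
  rw [Real.enorm_eq_ofReal_abs, abs_mul, abs_of_pos (by positivity)]
  refine ENNReal.ofReal_le_ofReal ?_
  calc C / M * |stieltjesFun a (d - x)| ≤ C / M * (M * rexp (-(|x| ^ γ))) := by
        gcongr
        exact hbound x hx
    _ = C * rexp (-(|x| ^ γ)) := by field_simp

theorem one_sided_LSL_inapproximability_general {μ : Measure ℝ} {b C γ : ℝ} (hb : 0 < b)
    (hC : 0 < C) (hγ : γ ∈ Ico 0 (1 / 2))
    (hμ : (volume.restrict (Iic b)).withDensity
      (fun x => ENNReal.ofReal (C * rexp (-(|x| ^ γ)))) ≤ μ) :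
    ∃ ε > 0, ∀ q : Polynomial ℝ,
      ENNReal.ofReal ε < ∫⁻ x, ENNReal.ofReal |q.eval x - sgn x| ∂μ := by
  obtain ⟨a, hγa, ha⟩ := exists_between hγ.2
  have ha₀ : 0 < a := hγ.1.trans_lt hγa
  obtain ⟨κ, hκ, hdom⟩ :=
    exists_withDensity_mul_stieltjesFun_sub_le hγ.1 hγa ha hC (min_le_left b 1)
  set d := min b 1
  refine exists_pos_forall_lt_lintegral_abs_eval_sub_of_orthogonal (hdom.trans hμ)
    (fun q => ?_) (fun q => ?_)
    (integrable_sgn_mul ((integrableOn_stieltjesFun_sub ha₀ ha d).const_mul κ)) ?_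
  · simp only [mul_left_comm _ κ]
    exact (integrableOn_eval_mul_stieltjesFun_sub ha₀ ha d q).const_mul κ
  · simp only [mul_left_comm _ κ, integral_const_mul,
      setIntegral_eval_mul_stieltjesFun_sub_eq_zero ha₀ ha, mul_zero]
  · simp only [mul_left_comm _ κ, integral_const_mul]
    exact (mul_pos hκ (setIntegral_sgn_mul_stieltjesFun_sub_pos ha₀ ha (lt_min hb one_pos)
      (min_le_right b 1))).ne'

end

theorem one_sided_LSL_inapproximability
    (μ : Measure ℝ) [IsProbabilityMeasure μ] (w : ℝ → ℝ)
    (hμ : μ = volume.withDensity fun x => ENNReal.ofReal (w x))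
    (C γ : ℝ) (hC : 0 < C) (hγ : γ ∈ Set.Ioo (0 : ℝ) (1 / 2))
    (hw : ∀ᵐ x ∂volume, x ≤ 1 → C * Real.exp (-(|x| ^ γ)) ≤ w x) :
    ∃ ε > 0, ∀ q : Polynomial ℝ,
      ENNReal.ofReal ε < ∫⁻ x, ENNReal.ofReal |q.eval x - sgn x| ∂μ :=
  one_sided_LSL_inapproximability_general one_pos hC (Set.Ioo_subset_Ico_self hγ)
    (hμ ▸ withDensity_restrict_le_withDensity measurableSet_Iic
      (hw.mono fun _ hx h => ENNReal.ofReal_le_ofReal (hx h)))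
end

section
/- There exists a squarefree real polynomial p in one variable such that the set {x ∈ ℝ : p(x) ≥ 0} is compact, and there exists ε > 0 such that for every real polynomial q, ∫ |q(p(x)) − sgn(p(x))| dγ(x) > ε, where γ is the standard Gaussian measure N(0,1) on ℝ. -/
open MeasureTheory ProbabilityTheory

/-!
The polynomials in `x ^ 8` are not dense in `L¹(γ)`: put `b = (1 + i) / 2`, so that
`|exp (-b x²)| = exp (-x² / 2)` and `b ^ 4 = -1 / 4` is real. Integration by parts shows that each
moment `∫ x ^ (8 n) exp (-b x²) dx` is a real multiple of the mass `M = ∫ exp (-b x²) dx`. Hence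
`Im (conj M · exp (-b x²)) = exp (-x² / 2) g(x)` is orthogonal to all polynomials in `x ^ 8`, where
`g` is bounded and continuous, and `g(0) = -Im M ≠ 0` because `M² = π / b` is not real. For
`p = a ^ 8 - X ^ 8` every `q ∘ p` is such a polynomial, whereas
`∫ sgn(p) g dγ = 2 ∫_{[-a, a]} g dγ ≠ 0` for small `a > 0`. So the functional
`f ↦ ∫ f g dγ`, which is bounded on `L¹(γ)`, separates `sgn ∘ p` from all `q ∘ p`.
-/

open Polynomial Filter Metric
open scoped Topology ComplexConjugate Nat

section Duality

variable {α : Type*} [MeasurableSpace α] {μ : Measure α} {g : α → ℝ}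

lemma abs_integral_mul_le_mul_integral_abs_sub {f h : α → ℝ} {C : ℝ}
    (hf : Integrable f μ) (hh : Integrable h μ) (hg : AEStronglyMeasurable g μ)
    (hgC : ∀ᵐ x ∂μ, |g x| ≤ C) (hfg : ∫ x, f x * g x ∂μ = 0) :
    |∫ x, h x * g x ∂μ| ≤ C * ∫ x, |f x - h x| ∂μ := by
  have integrable_mul_g {u : α → ℝ} (hu : Integrable u μ) : Integrable (fun x ↦ u x * g x) μ :=
    hu.mul_bdd hg hgC
  calc |∫ x, h x * g x ∂μ|
      = |∫ x, (f x - h x) * g x ∂μ| := by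
        simp_rw [sub_mul]
        rw [integral_sub (integrable_mul_g hf) (integrable_mul_g hh), hfg, zero_sub, abs_neg]
    _ ≤ ∫ x, |(f x - h x) * g x| ∂μ := abs_integral_le_integral_abs
    _ ≤ ∫ x, C * |f x - h x| ∂μ := by
        refine integral_mono_ae (integrable_mul_g (hf.sub hh)).abs
          ((hf.sub hh).abs.const_mul C) (hgC.mono fun x hx ↦ ?_)
        simp only [abs_mul, mul_comm C]
        exact mul_le_mul_of_nonneg_left hx (abs_nonneg _)
    _ = C * ∫ x, |f x - h x| ∂μ := integral_const_mul _ _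

lemma exists_pos_forall_lt_integral_abs_sub {ι : Type*} {f : ι → α → ℝ} {h : α → ℝ} {C : ℝ}
    (hf : ∀ i, Integrable (f i) μ) (hh : Integrable h μ) (hg : AEStronglyMeasurable g μ)
    (hgC : ∀ᵐ x ∂μ, |g x| ≤ C) (hfg : ∀ i, ∫ x, f i x * g x ∂μ = 0)
    (hhg : ∫ x, h x * g x ∂μ ≠ 0) :
    ∃ ε > 0, ∀ i, ε < ∫ x, |f i x - h x| ∂μ := by
  refine ⟨|∫ x, h x * g x ∂μ| / (|C| + 1), by positivity, fun i ↦ ?_⟩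
  have hbound := abs_integral_mul_le_mul_integral_abs_sub (hf i) hh hg
    (hgC.mono fun x hx ↦ hx.trans (le_abs_self C)) (hfg i)
  have hpos : 0 < |∫ x, h x * g x ∂μ| := abs_pos.2 hhg
  rw [div_lt_iff₀ (by positivity)]
  by_contra! hle
  nlinarith [abs_nonneg C]

lemma integral_eval_mul_eq_zero_of_forall_pow {u : α → ℝ}
    (hint : ∀ n : ℕ, Integrable (fun x ↦ u x ^ n * g x) μ)
    (hzero : ∀ n : ℕ, ∫ x, u x ^ n * g x ∂μ = 0) (Q : ℝ[X]) :
    ∫ x, Q.eval (u x) * g x ∂μ = 0 := by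
  simp_rw [eval_eq_sum_range, Finset.sum_mul, mul_assoc]
  rw [integral_finsetSum _ fun n _ ↦ (hint n).const_mul _]
  simp only [integral_const_mul, hzero, mul_zero, Finset.sum_const_zero]

end Duality

section Sign

lemma measurable_sgn : Measurable sgn :=
  Measurable.ite measurableSet_Ici measurable_const measurable_const

lemma abs_sgn (t : ℝ) : |sgn t| = 1 := by
  unfold sgn
  split_ifs <;> simp

variable {α : Type*} [MeasurableSpace α] {μ : Measure α} {f g : α → ℝ}

lemma integrable_sgn_comp [IsFiniteMeasure μ] (hf : Measurable f) :
    Integrable (fun x ↦ sgn (f x)) μ :=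
  .of_bound (measurable_sgn.comp hf).aestronglyMeasurable 1
    (.of_forall fun x ↦ (abs_sgn (f x)).le)

lemma integral_sgn_mul_s3 (hf : Measurable f) (hg : Integrable g μ) :
    ∫ x, sgn (f x) * g x ∂μ = 2 * ∫ x in {x | 0 ≤ f x}, g x ∂μ - ∫ x, g x ∂μ := by
  have hS : MeasurableSet {x | 0 ≤ f x} := measurableSet_le measurable_const hf
  have hsgn (x : α) : sgn (f x) * g x = 2 * {x | 0 ≤ f x}.indicator g x - g x := by
    by_cases hx : 0 ≤ f x
    · rw [sgn, if_pos hx, Set.indicator_of_mem (by exact hx)]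
      ring
    · rw [sgn, if_neg hx, Set.indicator_of_notMem (by exact hx)]
      ring
  simp_rw [hsgn]
  rw [integral_sub ((hg.indicator hS).const_mul 2) hg, integral_const_mul, integral_indicator hS]

end Sign

lemma eventually_setIntegral_closedBall_ne_zero {X E : Type*} [PseudoMetricSpace X]
    [MeasurableSpace X] [OpensMeasurableSpace X] [NormedAddCommGroup E] [NormedSpace ℝ E]
    [CompleteSpace E] {μ : Measure X} [IsLocallyFiniteMeasure μ] [μ.IsOpenPosMeasure]
    {g : X → E} {x : X} (hg : ContinuousAt g x) (hgm : StronglyMeasurableAtFilter g (𝓝 x) μ)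
    (hgx : g x ≠ 0) :
    ∀ᶠ a in 𝓝[>] (0 : ℝ), ∫ y in closedBall x a, g y ∂μ ≠ 0 := by
  have hball : Tendsto (closedBall x) (𝓝[>] 0) (𝓝 x).smallSets :=
    (tendsto_closedBall_smallSets x).mono_left nhdsWithin_le_nhds
  filter_upwards [(hg.integral_sub_linear_isLittleO_ae hgm hball).def
      (half_pos (norm_pos_iff.2 hgx)), hball.eventually (μ.finiteAt_nhds x).eventually,
    self_mem_nhdsWithin] with a ha ha_fin ha_pos hzero
  have hmass : 0 < μ.real (closedBall x a) :=
    ENNReal.toReal_pos (measure_closedBall_pos μ x ha_pos).ne' ha_fin.ne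
  rw [hzero, zero_sub, norm_neg, norm_smul, Real.norm_of_nonneg hmass.le] at ha
  nlinarith [norm_pos_iff.2 hgx]

section ComplexGaussian

/-- The total mass of the complex Gaussian weight `exp (-b x²)`; it is the reference phase for the
moments of that weight. It is meaningful for `0 < b.re`. -/
noncomputable def gaussianMass (b : ℂ) : ℂ := ∫ x : ℝ, Complex.exp (-b * (x : ℂ) ^ 2)

variable {b : ℂ}

lemma gaussianMass_sq (hb : 0 < b.re) : gaussianMass b ^ 2 = Real.pi / b := by
  rw [gaussianMass, integral_gaussian_complex hb, ← Complex.cpow_nat_mul]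
  norm_num

lemma gaussianMass_im_ne_zero (hb : 0 < b.re) (hb_im : b.im ≠ 0) : (gaussianMass b).im ≠ 0 := by
  intro hreal
  have hb0 : b ≠ 0 := fun h ↦ by simp [h] at hb
  have him : (gaussianMass b ^ 2).im = 0 := by simp [pow_two, hreal]
  rw [gaussianMass_sq hb, Complex.div_im] at him
  simp [Real.pi_ne_zero, hb_im, hb0] at him

lemma integrable_pow_mul_cexp_neg_mul_sq (hb : 0 < b.re) (k : ℕ) :
    Integrable fun x : ℝ ↦ (x : ℂ) ^ k * Complex.exp (-b * (x : ℂ) ^ 2) := by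
  have hreal := integrable_rpow_mul_exp_neg_mul_sq hb (s := k)
    (by linarith [k.cast_nonneg (α := ℝ)])
  refine hreal.norm.mono' (by fun_prop) (.of_forall fun x ↦ ?_)
  rw [norm_mul, norm_mul, norm_cexp_neg_mul_sq]
  simp

lemma hasDerivAt_pow_mul_cexp_neg_mul_sq (b : ℂ) (k : ℕ) (x : ℝ) :
    HasDerivAt (fun x : ℝ ↦ (x : ℂ) ^ (k + 1) * Complex.exp (-b * (x : ℂ) ^ 2))
      ((k + 1) * ((x : ℂ) ^ k * Complex.exp (-b * (x : ℂ) ^ 2)) -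
        2 * b * ((x : ℂ) ^ (k + 2) * Complex.exp (-b * (x : ℂ) ^ 2))) x := by
  have hcomplex := (hasDerivAt_pow (k + 1) (x : ℂ)).mul
    (((hasDerivAt_pow 2 (x : ℂ)).const_mul (-b)).cexp)
  refine (hcomplex.congr_deriv ?_).comp_ofReal
  push_cast
  ring

lemma two_mul_mul_integral_pow_add_two_mul_cexp_neg_mul_sq (hb : 0 < b.re) (k : ℕ) :
    2 * b * ∫ x : ℝ, (x : ℂ) ^ (k + 2) * Complex.exp (-b * (x : ℂ) ^ 2) =
      (k + 1) * ∫ x : ℝ, (x : ℂ) ^ k * Complex.exp (-b * (x : ℂ) ^ 2) := by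
  have hlow := (integrable_pow_mul_cexp_neg_mul_sq hb k).const_mul (k + 1)
  have hhigh := (integrable_pow_mul_cexp_neg_mul_sq hb (k + 2)).const_mul (2 * b)
  have hparts := integral_eq_zero_of_hasDerivAt_of_integrable
    (hasDerivAt_pow_mul_cexp_neg_mul_sq b k) (hlow.sub hhigh)
    (integrable_pow_mul_cexp_neg_mul_sq hb (k + 1))
  rw [integral_sub hlow hhigh, integral_const_mul, integral_const_mul] at hparts
  exact (sub_eq_zero.1 hparts).symm

-- At `n = 0` the truncated subtraction gives `0‼ = 1`, as it should.
lemma integral_pow_two_mul_mul_cexp_neg_mul_sq (hb : 0 < b.re) (n : ℕ) :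
    ∫ x : ℝ, (x : ℂ) ^ (2 * n) * Complex.exp (-b * (x : ℂ) ^ 2) =
      (2 * n - 1)‼ / (2 * b) ^ n * gaussianMass b := by
  have hb0 : b ≠ 0 := fun h ↦ by simp [h] at hb
  induction n with
  | zero => simp [gaussianMass]
  | succ n ih =>
    have hrec := two_mul_mul_integral_pow_add_two_mul_cexp_neg_mul_sq hb (2 * n)
    have hfact : (2 * (n + 1) - 1)‼ = (2 * n + 1) * (2 * n - 1)‼ := Nat.doubleFactorial_add_one _
    rw [ih] at hrec
    rw [hfact, ← mul_right_inj' (mul_ne_zero two_ne_zero hb0), mul_add_one, hrec]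
    push_cast
    field_simp
    ring

lemma im_conj_gaussianMass_mul_integral_pow_eq_zero (hb : 0 < b.re) {m : ℕ} {r : ℝ}
    (hbm : b ^ m = r) (n : ℕ) :
    (conj (gaussianMass b) *
      ∫ x : ℝ, (x : ℂ) ^ (2 * (m * n)) * Complex.exp (-b * (x : ℂ) ^ 2)).im = 0 := by
  have hreal : conj (gaussianMass b) *
      ((2 * (m * n) - 1)‼ / (2 * b) ^ (m * n) * gaussianMass b) =
      (((2 * (m * n) - 1)‼ / (2 ^ (m * n) * r ^ n) * Complex.normSq (gaussianMass b) : ℝ) : ℂ) := by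
    rw [mul_left_comm, mul_comm (conj _), Complex.mul_conj, mul_pow, pow_mul b, hbm]
    push_cast
    rfl
  rw [integral_pow_two_mul_mul_cexp_neg_mul_sq hb, hreal, Complex.ofReal_im]

end ComplexGaussian

lemma integrable_eval_gaussianReal (Q : ℝ[X]) (μ : ℝ) (v : NNReal) :
    Integrable (fun x ↦ Q.eval x) (gaussianReal μ v) := by
  have hpow (n : ℕ) : Integrable (fun x : ℝ ↦ x ^ n) (gaussianReal μ v) :=
    integrable_pow_of_mem_interior_integrableExpSet (by simp) n
  simp_rw [eval_eq_sum_range]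
  exact integrable_finsetSum _ fun n _ ↦ (hpow n).const_mul _

section Chirp

/-- The bounded function `g` with `exp (-x² / 2) * g x = Im (conj M * exp (-b x²))`, where
`b = 1 / 2 + t i` and `M` is the mass of `exp (-b x²)`. When `b ^ m` is real it is orthogonal
to the polynomials in `x ^ (2 m)` with respect to the standard Gaussian measure. -/
noncomputable def gaussianChirp (t x : ℝ) : ℝ :=
  (conj (gaussianMass (1 / 2 + t * Complex.I)) *
    Complex.exp (((-t * x ^ 2 : ℝ) : ℂ) * Complex.I)).im

lemma continuous_gaussianChirp (t : ℝ) : Continuous (gaussianChirp t) := by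
  unfold gaussianChirp
  fun_prop

lemma abs_gaussianChirp_le (t x : ℝ) :
    |gaussianChirp t x| ≤ ‖gaussianMass (1 / 2 + t * Complex.I)‖ := by
  refine (Complex.abs_im_le_norm _).trans_eq ?_
  rw [norm_mul, Complex.norm_exp_ofReal_mul_I, mul_one, RCLike.norm_conj]

lemma gaussianChirp_zero_ne_zero {t : ℝ} (ht : t ≠ 0) : gaussianChirp t 0 ≠ 0 := by
  simpa [gaussianChirp] using
    gaussianMass_im_ne_zero (b := 1 / 2 + t * Complex.I) (by norm_num) (by simpa using ht)

lemma gaussianPDFReal_mul_pow_mul_gaussianChirp (t : ℝ) (k : ℕ) (x : ℝ) :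
    gaussianPDFReal 0 1 x * (x ^ k * gaussianChirp t x) =
      (√(2 * Real.pi))⁻¹ * (conj (gaussianMass (1 / 2 + t * Complex.I)) *
        ((x : ℂ) ^ k * Complex.exp (-(1 / 2 + t * Complex.I) * (x : ℂ) ^ 2))).im := by
  have hexp : Complex.exp (-(1 / 2 + t * Complex.I) * (x : ℂ) ^ 2) =
      (Real.exp (-x ^ 2 / 2) : ℂ) * Complex.exp (((-t * x ^ 2 : ℝ) : ℂ) * Complex.I) := by
    rw [Complex.ofReal_exp, ← Complex.exp_add]
    push_cast
    ring_nf
  have hfactor : conj (gaussianMass (1 / 2 + t * Complex.I)) *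
      ((x : ℂ) ^ k * Complex.exp (-(1 / 2 + t * Complex.I) * (x : ℂ) ^ 2)) =
      ((x ^ k * Real.exp (-x ^ 2 / 2) : ℝ) : ℂ) *
        (conj (gaussianMass (1 / 2 + t * Complex.I)) *
          Complex.exp (((-t * x ^ 2 : ℝ) : ℂ) * Complex.I)) := by
    rw [hexp]
    push_cast
    ring
  rw [hfactor, Complex.im_ofReal_mul, ← gaussianChirp, gaussianPDFReal]
  simp only [NNReal.coe_one, mul_one, sub_zero]
  ring

lemma integral_pow_mul_gaussianChirp (t : ℝ) (k : ℕ) :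
    ∫ x, x ^ k * gaussianChirp t x ∂(gaussianReal 0 1) =
      (√(2 * Real.pi))⁻¹ * (conj (gaussianMass (1 / 2 + t * Complex.I)) *
        ∫ x : ℝ, (x : ℂ) ^ k * Complex.exp (-(1 / 2 + t * Complex.I) * (x : ℂ) ^ 2)).im := by
  have hint := (integrable_pow_mul_cexp_neg_mul_sq (b := 1 / 2 + t * Complex.I) (by norm_num)
    k).const_mul (conj (gaussianMass (1 / 2 + t * Complex.I)))
  rw [integral_gaussianReal_eq_integral_smul one_ne_zero]
  simp_rw [smul_eq_mul, gaussianPDFReal_mul_pow_mul_gaussianChirp]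
  rw [integral_const_mul, ← integral_const_mul (conj _)]
  exact congrArg _ (integral_im hint)

lemma integral_eval_pow_mul_gaussianChirp_eq_zero {t : ℝ} {m : ℕ} {r : ℝ}
    (hr : (1 / 2 + t * Complex.I) ^ m = r) (Q : ℝ[X]) :
    ∫ x, Q.eval (x ^ (2 * m)) * gaussianChirp t x ∂(gaussianReal 0 1) = 0 := by
  refine integral_eval_mul_eq_zero_of_forall_pow (fun n ↦ ?_) (fun n ↦ ?_) Q
  · have hpow := integrable_eval_gaussianReal ((X ^ (2 * m)) ^ n) 0 1
    simp only [eval_pow, eval_X] at hpow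
    exact hpow.mul_bdd (continuous_gaussianChirp t).aestronglyMeasurable
      (.of_forall (abs_gaussianChirp_le t))
  · simp_rw [← pow_mul, mul_assoc 2 m n]
    rw [integral_pow_mul_gaussianChirp,
      im_conj_gaussianMass_mul_integral_pow_eq_zero (by norm_num) hr, mul_zero]

end Chirp

section CSubXPow

lemma squarefree_C_sub_X_pow {F : Type*} [Field F] {k : ℕ} {c : F} (hk : (k : F) ≠ 0)
    (hc : c ≠ 0) : Squarefree (C c - X ^ k) := by
  rw [← neg_sub, (Associated.refl _).neg_left.squarefree_iff]
  exact (separable_X_pow_sub_C c hk hc).squarefree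

lemma setOf_eval_C_pow_sub_X_pow_nonneg {k : ℕ} (hk : Even k) (hk0 : k ≠ 0) {a : ℝ}
    (ha : 0 ≤ a) : {x : ℝ | 0 ≤ (C (a ^ k) - X ^ k).eval x} = closedBall 0 a := by
  ext x
  simp only [Set.mem_ofPred_eq, eval_sub, eval_C, eval_pow, eval_X, sub_nonneg,
    mem_closedBall_zero_iff, Real.norm_eq_abs]
  rw [← hk.pow_abs, pow_le_pow_iff_left₀ (abs_nonneg x) ha hk0]

end CSubXPow

lemma integral_eval_comp_C_sub_X_pow_mul_gaussianChirp_eq_zero {t : ℝ} {m : ℕ} {r : ℝ}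
    (hr : (1 / 2 + t * Complex.I) ^ m = r) (c : ℝ) (q : ℝ[X]) :
    ∫ x, q.eval ((C c - X ^ (2 * m)).eval x) * gaussianChirp t x ∂(gaussianReal 0 1) = 0 := by
  have hcomp (x : ℝ) :
      q.eval ((C c - X ^ (2 * m)).eval x) = (q.comp (C c - X)).eval (x ^ (2 * m)) := by simp
  simp_rw [hcomp]
  exact integral_eval_pow_mul_gaussianChirp_eq_zero hr _

lemma integral_sgn_mul_gaussianChirp {t : ℝ} {m : ℕ} {r : ℝ}
    (hr : (1 / 2 + t * Complex.I) ^ m = r) {f : ℝ → ℝ} (hf : Measurable f) :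
    ∫ x, sgn (f x) * gaussianChirp t x ∂(gaussianReal 0 1) =
      2 * ∫ x in {x | 0 ≤ f x}, gaussianChirp t x ∂(gaussianReal 0 1) := by
  have hint : Integrable (gaussianChirp t) (gaussianReal 0 1) :=
    .of_bound (continuous_gaussianChirp t).aestronglyMeasurable _
      (.of_forall (abs_gaussianChirp_le t))
  have hzero : ∫ x, gaussianChirp t x ∂(gaussianReal 0 1) = 0 := by
    simpa using integral_eval_pow_mul_gaussianChirp_eq_zero hr 1
  rw [integral_sgn_mul_s3 hf hint, hzero, sub_zero]

lemma exists_pos_setIntegral_closedBall_gaussianChirp_ne_zero {t : ℝ} (ht : t ≠ 0) :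
    ∃ a > 0, ∫ x in closedBall 0 a, gaussianChirp t x ∂(gaussianReal 0 1) ≠ 0 := by
  have : (gaussianReal 0 1).IsOpenPosMeasure :=
    (gaussianReal_absolutelyContinuous' 0 one_ne_zero).isOpenPosMeasure
  have hcont := continuous_gaussianChirp t
  obtain ⟨a, hne, ha⟩ := ((eventually_setIntegral_closedBall_ne_zero
    (μ := gaussianReal 0 1) hcont.continuousAt
    (hcont.stronglyMeasurableAtFilter _ _) (gaussianChirp_zero_ne_zero ht)).and
      self_mem_nhdsWithin).exists
  exact ⟨a, ha, hne⟩

lemma half_add_half_mul_I_pow_four :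
    (1 / 2 + ((1 / 2 : ℝ) : ℂ) * Complex.I) ^ 4 = ((-1 / 4 : ℝ) : ℂ) := by
  push_cast
  linear_combination (1 / 16 * Complex.I ^ 2 + 1 / 4 * Complex.I + 5 / 16) * Complex.I_sq

theorem exists_squarefree_compact_PTF_inapproximable :
    ∃ p : Polynomial ℝ, Squarefree p ∧ IsCompact {x : ℝ | 0 ≤ p.eval x} ∧
      ∃ ε > 0, ∀ q : Polynomial ℝ,
        ε < ∫ x, |q.eval (p.eval x) - sgn (p.eval x)| ∂(gaussianReal 0 1) := by
  obtain ⟨a, ha, hne⟩ :=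
    exists_pos_setIntegral_closedBall_gaussianChirp_ne_zero (t := 1 / 2) (by norm_num)
  have hset := setOf_eval_C_pow_sub_X_pow_nonneg (k := 2 * 4) (by decide) (by decide) ha.le
  refine ⟨C (a ^ (2 * 4)) - X ^ (2 * 4),
    squarefree_C_sub_X_pow (by norm_num) (pow_ne_zero _ ha.ne'),
    hset ▸ isCompact_closedBall 0 a, ?_⟩
  refine exists_pos_forall_lt_integral_abs_sub (g := gaussianChirp (1 / 2))
    (fun q ↦ ?_) (integrable_sgn_comp (Polynomial.continuous _).measurable)
    (continuous_gaussianChirp _).aestronglyMeasurable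
    (.of_forall (abs_gaussianChirp_le _))
    (integral_eval_comp_C_sub_X_pow_mul_gaussianChirp_eq_zero half_add_half_mul_I_pow_four _) ?_
  · simpa only [eval_comp] using integrable_eval_gaussianReal (q.comp _) 0 1
  · rw [integral_sgn_mul_gaussianChirp half_add_half_mul_I_pow_four
      (Polynomial.continuous _).measurable, hset]
    exact mul_ne_zero two_ne_zero hne
end

section
/- For every γ ∈ (0, 1/2) there exists a constant M > 0, depending only on γ, such that for every real polynomial q in one variable: sup over x with |x − 1| ≤ 1/4 of |q'(x)| is at most M·∫₀^∞ |q(x)|·exp(−x^γ) dx. -/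
open MeasureTheory

open Complex ComplexConjugate Filter Metric Polynomial ProbabilityTheory Set Topology
open scoped Interval NNReal Nat Real

/-!
Substituting `t = s ^ 2` turns the integral `J` over the half-line into the integral of
`|s p(s ^ 2)| exp (-|s| ^ (2 γ))` over `ℝ`. Since `2 γ < 1`, the weight `exp (-|s| ^ (2 γ))` is the
boundary modulus of a zero-free bounded holomorphic function on the upper half-plane. The Poisson
formula for `z p(z ^ 2)` times that function, with the kernel bounded by `1 / (π Im z)`, gives
`|p(w)| |Im w| ≤ K J` for all complex `w` in a given disc.

The factor `|Im w|` is removed by the maximum principle: on the circle `|w| = r` it equals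
`|w ^ 2 - r ^ 2| / (2 r)`, so the polynomial `(w ^ 2 - r ^ 2) p(w)` is at most `2 r K J` on the
whole disc. Hence `p` is bounded on smaller discs, and the Cauchy estimate bounds its derivative.
-/

section UpperHalfPlane

variable {E : Type*} [NormedAddCommGroup E] [NormedSpace ℂ E] {f G : ℂ → E} {s : Set ℂ}
  {B C R : ℝ} {z : ℂ}

theorem intervalIntegral_eq_integral_boundary_square (hs : s.Countable)
    (hc : ContinuousOn f {w | 0 ≤ w.im}) (hd : ∀ w ∉ s, 0 < w.im → DifferentiableAt ℂ f w)
    (hR : 0 ≤ R) :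
    ∫ t : ℝ in -R..R, f t =
      (∫ t : ℝ in -R..R, f (t + R * I)) - I • (∫ y : ℝ in 0..R, f (R + y * I)) +
        I • ∫ y : ℝ in 0..R, f ((-R : ℝ) + y * I) := by
  have hrect := integral_boundary_rect_eq_zero_of_differentiable_on_off_countable f
    (⟨-R, 0⟩ : ℂ) (⟨R, R⟩ : ℂ) s hs
    (hc.mono fun w hw ↦ by
      have him : w.im ∈ [[0, R]] := hw.2
      rw [uIcc_of_le hR] at him
      exact him.1)
    fun w hw ↦ hd w hw.2 <| by
      have him : w.im ∈ Ioo (min 0 R) (max 0 R) := hw.1.2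
      rw [min_eq_left hR] at him
      exact him.1
  simp only [ofReal_zero, zero_mul, add_zero] at hrect
  rw [← sub_eq_zero, ← hrect]
  abel

theorem norm_intervalIntegral_le_of_forall_le_norm (hs : s.Countable)
    (hc : ContinuousOn f {w | 0 ≤ w.im}) (hd : ∀ w ∉ s, 0 < w.im → DifferentiableAt ℂ f w)
    (hR : 0 ≤ R) (hf : ∀ w : ℂ, 0 ≤ w.im → R ≤ ‖w‖ → ‖f w‖ ≤ C) :
    ‖∫ t : ℝ in -R..R, f t‖ ≤ 4 * R * C := by
  have htop : ‖∫ t : ℝ in -R..R, f (t + R * I)‖ ≤ C * |R - -R| :=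
    intervalIntegral.norm_integral_le_of_norm_le_const fun t _ ↦
      hf _ (by simp [hR]) (by simpa [abs_of_nonneg hR] using abs_im_le_norm (t + R * I))
  have hside (a : ℝ) (ha : |a| = R) : ‖I • ∫ y : ℝ in 0..R, f (a + y * I)‖ ≤ C * |R - 0| := by
    rw [norm_smul, norm_I, one_mul]
    refine intervalIntegral.norm_integral_le_of_norm_le_const fun y hy ↦ hf _ ?_ ?_
    · rw [uIoc_of_le hR] at hy
      simp [hy.1.le]
    · simpa [ha] using abs_re_le_norm (a + y * I)
  calc
    ‖∫ t : ℝ in -R..R, f t‖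
      ≤ C * |R - -R| + C * |R - 0| + C * |R - 0| := by
        rw [intervalIntegral_eq_integral_boundary_square hs hc hd hR]
        exact norm_add_le_of_le (norm_sub_le_of_le htop (hside R (abs_of_nonneg hR)))
          (hside (-R) (by rw [abs_neg, abs_of_nonneg hR]))
    _ = 4 * R * C := by
        rw [abs_of_nonneg (by linarith), abs_of_nonneg (by linarith)]
        ring

theorem tendsto_intervalIntegral_zero_of_norm_le_div_sq (hs : s.Countable)
    (hc : ContinuousOn f {w | 0 ≤ w.im}) (hd : ∀ w ∉ s, 0 < w.im → DifferentiableAt ℂ f w)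
    (hf : ∀ w : ℂ, 0 ≤ w.im → R ≤ ‖w‖ → ‖f w‖ ≤ C / ‖w‖ ^ 2) :
    Tendsto (fun r : ℝ ↦ ∫ t : ℝ in -r..r, f t) atTop (𝓝 0) := by
  have hlim : Tendsto (fun r : ℝ ↦ 4 * |C| / r) atTop (𝓝 0) :=
    tendsto_const_nhds.div_atTop tendsto_id
  refine squeeze_zero_norm' ?_ hlim
  filter_upwards [eventually_ge_atTop R, eventually_gt_atTop 0] with r hRr hr
  calc
    ‖∫ t : ℝ in -r..r, f t‖ ≤ 4 * r * (|C| / r ^ 2) :=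
      norm_intervalIntegral_le_of_forall_le_norm hs hc hd hr.le fun w hw hrw ↦
        (hf w hw (hRr.trans hrw)).trans (by gcongr; exact le_abs_self C)
    _ = 4 * |C| / r := by field_simp

/-- The quotient `(Im z / π) (G w - G z) / ((w - z) (w - z̄))`, with its removable singularity at
`w = z` filled in by `dslope`. On the real line, `(Im z / π) / ((t - z) (t - z̄))` is the Poisson
kernel of the upper half-plane, which is the density of a Cauchy distribution. -/
noncomputable def poissonQuotient (G : ℂ → E) (z w : ℂ) : E :=
  (z.im / π / (w - conj z)) • dslope G z w

theorem sub_conj_ne_zero (hz : 0 < z.im) {w : ℂ} (hw : 0 ≤ w.im) : w - conj z ≠ 0 := fun h ↦ by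
  have him := congrArg im h
  rw [sub_im, conj_im, sub_neg_eq_add, zero_im] at him
  linarith

theorem poissonQuotient_ofReal (G : ℂ → E) (hz : 0 < z.im) (t : ℝ) :
    poissonQuotient G z t = cauchyPDFReal z.re z.im.toNNReal t • (G t - G z) := by
  have hne : (t : ℂ) ≠ z := fun h ↦ by simp [← h] at hz
  have hprod : ((t : ℂ) - conj z) * (t - z) = ((t - z.re) ^ 2 + z.im ^ 2 : ℝ) := by
    rw [← conj_ofReal t, ← map_sub, conj_ofReal, ← normSq_eq_conj_mul_self, normSq_apply, sub_re,
      sub_im, ofReal_re, ofReal_im]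
    ring_nf
  rw [poissonQuotient, dslope_of_ne _ hne, slope_def_module, smul_smul, ← Complex.coe_smul,
    cauchyPDFReal_def, Real.coe_toNNReal _ hz.le, ofReal_mul, ofReal_inv, ← hprod]
  congr 1
  push_cast [mul_inv]
  ring

theorem norm_poissonQuotient_le (hB : ∀ w : ℂ, 0 ≤ w.im → ‖G w‖ ≤ B) (hz : 0 < z.im) {w : ℂ}
    (hw : 0 ≤ w.im) (hzw : 2 * ‖z‖ ≤ ‖w‖) :
    ‖poissonQuotient G z w‖ ≤ 8 * (z.im / π) * B / ‖w‖ ^ 2 := by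
  have hz0 : 0 < ‖z‖ := norm_pos_iff.2 fun h ↦ by simp [h] at hz
  have hwz : ‖w‖ / 2 ≤ ‖w - z‖ := by linarith [norm_sub_norm_le w z]
  have hwzb : ‖w‖ / 2 ≤ ‖w - conj z‖ := by
    linarith [norm_sub_norm_le w (conj z), RCLike.norm_conj z]
  have hne : w ≠ z := by
    rintro rfl
    linarith
  have hG : ‖G w - G z‖ ≤ 2 * B := by linarith [norm_sub_le (G w) (G z), hB w hw, hB z hz.le]
  calc
    ‖poissonQuotient G z w‖ = z.im / π / ‖w - conj z‖ * (‖w - z‖⁻¹ * ‖G w - G z‖) := by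
      rw [poissonQuotient, dslope_of_ne _ hne, slope_def_module, norm_smul, norm_smul, norm_inv,
        norm_div, norm_div, norm_real, norm_real, Real.norm_of_nonneg hz.le,
        Real.norm_of_nonneg Real.pi_nonneg]
    _ ≤ z.im / π / (‖w‖ / 2) * ((‖w‖ / 2)⁻¹ * (2 * B)) := by gcongr <;> linarith
    _ = 8 * (z.im / π) * B / ‖w‖ ^ 2 := by
      field_simp
      ring

theorem continuousOn_poissonQuotient (hG : DiffContOnCl ℂ G {w | 0 < w.im}) (hz : 0 < z.im) :
    ContinuousOn (poissonQuotient G z) {w | 0 ≤ w.im} := by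
  have hopen : IsOpen {w : ℂ | 0 < w.im} := isOpen_lt continuous_const continuous_im
  refine ContinuousOn.smul (continuousOn_const.div (by fun_prop) fun w ↦ sub_conj_ne_zero hz) ?_
  have hnhds : {w : ℂ | 0 ≤ w.im} ∈ 𝓝 z :=
    mem_of_superset (hopen.mem_nhds hz) fun w (hw : 0 < w.im) ↦ hw.le
  exact (continuousOn_dslope hnhds).2
    ⟨by simpa using hG.continuousOn, hG.differentiableAt hopen hz⟩

theorem differentiableAt_poissonQuotient (hG : DiffContOnCl ℂ G {w | 0 < w.im}) (hz : 0 < z.im)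
    {w : ℂ} (hw : 0 < w.im) (hwz : w ≠ z) : DifferentiableAt ℂ (poissonQuotient G z) w := by
  refine DifferentiableAt.smul (.div (by fun_prop) (by fun_prop) (sub_conj_ne_zero hz hw.le)) ?_
  rw [differentiableAt_dslope_of_ne hwz]
  exact hG.differentiableAt (isOpen_lt continuous_const continuous_im) hw

theorem integral_cauchyPDFReal_smul [CompleteSpace E] (hG : DiffContOnCl ℂ G {w | 0 < w.im})
    (hB : ∀ w : ℂ, 0 ≤ w.im → ‖G w‖ ≤ B) (hz : 0 < z.im) :
    ∫ t : ℝ, cauchyPDFReal z.re z.im.toNNReal t • G t = G z := by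
  have hy : z.im.toNNReal ≠ 0 := by simpa using hz
  have hcont : ContinuousOn G {w | 0 ≤ w.im} := by simpa using hG.continuousOn
  set k := cauchyPDFReal z.re z.im.toNNReal
  have hk : Integrable k := integrable_cauchyPDFReal z.re
  have hkz : Integrable fun t ↦ k t • G z := hk.smul_const (G z)
  have hkG : Integrable fun t : ℝ ↦ k t • G t :=
    hk.smul_bdd B (hcont.comp_continuous continuous_ofReal (by simp)).aestronglyMeasurable <|
      .of_forall fun t ↦ hB t (by simp)
  have hquot (t : ℝ) : k t • G t - k t • G z = poissonQuotient G z t := by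
    rw [poissonQuotient_ofReal G hz, smul_sub]
  have hzero : Tendsto (fun r : ℝ ↦ ∫ t : ℝ in -r..r, k t • G t - k t • G z) atTop (𝓝 0) := by
    simp_rw [hquot]
    exact tendsto_intervalIntegral_zero_of_norm_le_div_sq (countable_singleton z)
      (continuousOn_poissonQuotient hG hz)
      (fun w hwz hw ↦ differentiableAt_poissonQuotient hG hz hw hwz)
      fun w ↦ norm_poissonQuotient_le hB hz
  have hlim := intervalIntegral_tendsto_integral (hkG.sub hkz) tendsto_neg_atTop_atBot tendsto_id
  calc
    ∫ t : ℝ, k t • G t = ∫ t : ℝ, k t • G z :=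
      sub_eq_zero.1 <| (integral_sub hkG hkz).symm.trans (tendsto_nhds_unique hlim hzero)
    _ = G z := by rw [integral_smul_const, integral_cauchyPDFReal_eq_one _ hy, one_smul]

theorem cauchyPDFReal_le (x₀ : ℝ) (γ : ℝ≥0) (x : ℝ) : cauchyPDFReal x₀ γ x ≤ (π * γ)⁻¹ := by
  rw [cauchyPDFReal_def', mul_inv, NNReal.coe_inv]
  exact mul_le_of_le_one_right (by positivity) (inv_le_one_of_one_le₀ (by nlinarith))

theorem norm_mul_pi_mul_im_le_integral_norm [CompleteSpace E] (hG : DiffContOnCl ℂ G {w | 0 < w.im})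
    (hB : ∀ w : ℂ, 0 ≤ w.im → ‖G w‖ ≤ B) (hint : Integrable fun t : ℝ ↦ G t) (hz : 0 < z.im) :
    ‖G z‖ * (π * z.im) ≤ ∫ t : ℝ, ‖G t‖ := by
  rw [← le_div_iff₀ (by positivity), div_eq_inv_mul, ← integral_const_mul,
    ← integral_cauchyPDFReal_smul hG hB hz]
  refine norm_integral_le_of_norm_le (hint.norm.const_mul _) (.of_forall fun t ↦ ?_)
  have hy : z.im.toNNReal ≠ 0 := by simpa using hz
  rw [norm_smul, Real.norm_of_nonneg (cauchyPDF_pos _ hy t).le]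
  gcongr
  simpa [hz.le] using cauchyPDFReal_le z.re z.im.toNNReal t

end UpperHalfPlane

section LocalEstimate

variable {E : Type*} [NormedAddCommGroup E] [NormedSpace ℂ E] {f : ℂ → E} {c : ℂ} {r A : ℝ}

theorem norm_sq_sub_sq_of_norm_eq {v : ℂ} (hv : ‖v‖ = r) : ‖v ^ 2 - r ^ 2‖ = 2 * r * |v.im| := by
  have hfactor : v ^ 2 - r ^ 2 = v * (2 * v.im * I) := by
    rw [← hv, ← mul_conj', ← ofReal_ofNat, ← ofReal_mul, ← sub_conj]
    ring
  rw [hfactor, norm_mul, norm_mul, norm_mul, hv, Complex.norm_ofNat, norm_real, norm_I,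
    Real.norm_eq_abs]
  ring

theorem norm_mul_sq_sub_sq_le_of_norm_mul_abs_im_le (hr : 0 < r) (hf : DiffContOnCl ℂ f (ball c r))
    (hA : ∀ v ∈ sphere c r, ‖f v‖ * |(v - c).im| ≤ A) {w : ℂ} (hw : w ∈ closedBall c r) :
    ‖f w‖ * (r ^ 2 - ‖w - c‖ ^ 2) ≤ 2 * r * A := by
  have hmax : ‖((w - c) ^ 2 - (r : ℂ) ^ 2) • f w‖ ≤ 2 * r * A := by
    refine norm_le_of_forall_mem_frontier_norm_le (f := fun v ↦ ((v - c) ^ 2 - (r : ℂ) ^ 2) • f v)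
      (isBounded_ball (x := c) (r := r)) ?_ (fun v hv ↦ ?_) (by rwa [closure_ball c hr.ne'])
    · have hdiff : Differentiable ℂ fun v ↦ (v - c) ^ 2 - (r : ℂ) ^ 2 := by fun_prop
      exact hdiff.diffContOnCl.smul hf
    · rw [frontier_ball c hr.ne'] at hv
      rw [norm_smul, norm_sq_sub_sq_of_norm_eq (mem_sphere_iff_norm.1 hv), mul_assoc, mul_comm |_|]
      gcongr
      exact hA v hv
  have hlow : r ^ 2 - ‖w - c‖ ^ 2 ≤ ‖(w - c) ^ 2 - r ^ 2‖ := by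
    have hr2 : ‖(r : ℂ) ^ 2‖ = r ^ 2 := by rw [norm_pow, norm_real, Real.norm_of_nonneg hr.le]
    rw [← norm_pow, norm_sub_rev ((w - c) ^ 2), ← hr2]
    exact norm_sub_norm_le _ _
  calc
    ‖f w‖ * (r ^ 2 - ‖w - c‖ ^ 2) ≤ ‖f w‖ * ‖(w - c) ^ 2 - r ^ 2‖ := by gcongr
    _ ≤ 2 * r * A := by rwa [mul_comm, ← norm_smul]

theorem norm_deriv_le_of_norm_mul_abs_im_le {ρ δ : ℝ} {x : ℂ} (hδ : 0 < δ) (hx : ‖x - c‖ + δ ≤ ρ)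
    (hρ : ρ < r) (hf : DiffContOnCl ℂ f (ball c r))
    (hA : ∀ v ∈ sphere c r, ‖f v‖ * |(v - c).im| ≤ A) :
    ‖deriv f x‖ ≤ 2 * r * A / (r ^ 2 - ρ ^ 2) / δ := by
  have hρ0 : 0 ≤ ρ := by linarith [norm_nonneg (x - c)]
  have hpos : 0 < r ^ 2 - ρ ^ 2 := by nlinarith
  refine norm_deriv_le_of_forall_mem_sphere_norm_le hδ
    (hf.mono <| ball_subset_ball' <| by rw [dist_eq_norm]; linarith) fun v hv ↦ ?_
  have hvρ : ‖v - c‖ ≤ ρ := by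
    linarith [norm_sub_le_norm_sub_add_norm_sub v x c, mem_sphere_iff_norm.1 hv]
  have hv' : v ∈ closedBall c r := mem_closedBall_iff_norm.2 (hvρ.trans hρ.le)
  rw [le_div_iff₀ hpos]
  calc
    ‖f v‖ * (r ^ 2 - ρ ^ 2) ≤ ‖f v‖ * (r ^ 2 - ‖v - c‖ ^ 2) := by gcongr
    _ ≤ 2 * r * A := norm_mul_sq_sub_sq_le_of_norm_mul_abs_im_le (by linarith) hf hA hv'

end LocalEstimate

section Weight

variable {α : ℝ}

/-- The function `exp (-(-i w) ^ α / cos (π α / 2))`. For `0 < α < 1` it is holomorphic on the upper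
half-plane, and the normalization makes its modulus equal to `exp (-|t| ^ α)` on the real line. -/
noncomputable def holomorphicWeight (α : ℝ) (w : ℂ) : ℂ :=
  cexp (-((Real.cos (π * α / 2))⁻¹ : ℝ) * (-I * w) ^ (α : ℂ))

theorem norm_holomorphicWeight (α : ℝ) (w : ℂ) :
    ‖holomorphicWeight α w‖ =
      Real.exp (-(‖w‖ ^ α * (Real.cos (arg (-I * w) * α) / Real.cos (π * α / 2)))) := by
  rw [holomorphicWeight, norm_exp, ← ofReal_neg, re_ofReal_mul, cpow_ofReal_re, norm_mul, norm_neg,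
    norm_I, one_mul]
  congr 1
  ring

theorem cos_pi_mul_div_two_pos (hα : α ∈ Ioo 0 1) : 0 < Real.cos (π * α / 2) :=
  Real.cos_pos_of_mem_Ioo ⟨by nlinarith [Real.pi_pos, hα.1], by nlinarith [Real.pi_pos, hα.2]⟩

theorem norm_holomorphicWeight_le (hα : α ∈ Ioo 0 1) {w : ℂ} (hw : 0 ≤ w.im) :
    ‖holomorphicWeight α w‖ ≤ Real.exp (-‖w‖ ^ α) := by
  have harg : |arg (-I * w)| ≤ π / 2 := abs_arg_le_pi_div_two_iff.2 (by simpa using hw)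
  have hcos : Real.cos (π * α / 2) ≤ Real.cos (arg (-I * w) * α) := by
    rw [← Real.cos_abs (arg (-I * w) * α), abs_mul, abs_of_pos hα.1]
    apply Real.cos_le_cos_of_nonneg_of_le_pi
    · exact mul_nonneg (abs_nonneg _) hα.1.le
    · nlinarith [Real.pi_pos, hα.2]
    · nlinarith [hα.1]
  rw [norm_holomorphicWeight]
  gcongr
  exact le_mul_of_one_le_right (by positivity) ((one_le_div₀ (cos_pi_mul_div_two_pos hα)).2 hcos)

theorem le_norm_holomorphicWeight (hα : α ∈ Ioo 0 1) (w : ℂ) :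
    Real.exp (-(‖w‖ ^ α / Real.cos (π * α / 2))) ≤ ‖holomorphicWeight α w‖ := by
  have hcos := cos_pi_mul_div_two_pos hα
  rw [norm_holomorphicWeight, div_eq_mul_one_div (‖w‖ ^ α)]
  gcongr
  exact Real.cos_le_one _

theorem diffContOnCl_holomorphicWeight (hα : 0 < α) :
    DiffContOnCl ℂ (holomorphicWeight α) {w | 0 < w.im} := by
  constructor
  · intro w hw
    have hslit : -I * w ∈ slitPlane := Or.inl (by simpa using hw)
    exact ((DifferentiableAt.cpow (by fun_prop) (by fun_prop) hslit).const_mul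
      _).cexp.differentiableWithinAt
  · rw [closure_setOfPred_lt_im]
    intro w hw
    have hpow : ContinuousAt (fun u : ℂ ↦ u ^ (α : ℂ)) (-I * w) :=
      continuousAt_cpow_const_of_re_pos (Or.inl (by simpa using hw)) (by simpa using hα)
    exact ((hpow.comp (f := fun w ↦ -I * w) (by fun_prop)).const_mul _).cexp.continuousWithinAt

theorem exists_pow_mul_exp_neg_rpow_le (hα : 0 < α) (n : ℕ) :
    ∃ B : ℝ, ∀ r : ℝ, 0 ≤ r → r ^ n * Real.exp (-r ^ α) ≤ B := by
  obtain ⟨m, hm⟩ := exists_nat_ge (n / α)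
  have hnm : (n : ℝ) ≤ α * m := by rwa [div_le_iff₀' hα] at hm
  refine ⟨m !, fun r hr ↦ ?_⟩
  rw [Real.exp_neg, ← div_eq_mul_inv, div_le_iff₀ (Real.exp_pos _)]
  rcases le_total r 1 with hr1 | hr1
  · calc
      r ^ n ≤ 1 * 1 := by simpa using pow_le_one₀ hr hr1
      _ ≤ m ! * Real.exp (r ^ α) := by
        gcongr
        · exact_mod_cast Nat.one_le_iff_ne_zero.2 m.factorial_ne_zero
        · exact Real.one_le_exp (by positivity)
  · calc
      r ^ n ≤ (r ^ α) ^ m := by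
        rw [← Real.rpow_natCast, ← Real.rpow_mul_natCast hr]
        exact Real.rpow_le_rpow_of_exponent_le hr1 hnm
      _ ≤ m ! * Real.exp (r ^ α) := by
        rw [← div_le_iff₀' (by positivity)]
        exact Real.pow_div_factorial_le_exp _ (by positivity) m

theorem exists_norm_eval_mul_exp_neg_rpow_le (hα : 0 < α) (P : ℂ[X]) :
    ∃ B : ℝ, ∀ w : ℂ, ‖P.eval w‖ * Real.exp (-‖w‖ ^ α) ≤ B := by
  induction P using Polynomial.induction_on' with
  | add P Q hP hQ =>
    obtain ⟨B, hB⟩ := hP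
    obtain ⟨B', hB'⟩ := hQ
    refine ⟨B + B', fun w ↦ ?_⟩
    calc
      ‖(P + Q).eval w‖ * Real.exp (-‖w‖ ^ α)
        ≤ (‖P.eval w‖ + ‖Q.eval w‖) * Real.exp (-‖w‖ ^ α) := by
          rw [eval_add]
          gcongr
          exact norm_add_le _ _
      _ ≤ B + B' := by
          rw [add_mul]
          exact add_le_add (hB w) (hB' w)
  | monomial n a =>
    obtain ⟨B, hB⟩ := exists_pow_mul_exp_neg_rpow_le hα n
    refine ⟨‖a‖ * B, fun w ↦ ?_⟩
    rw [eval_monomial, norm_mul, norm_pow, mul_assoc]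
    gcongr
    exact hB _ (norm_nonneg w)

theorem integrable_norm_eval_mul_exp_neg_rpow (hα : 0 < α) (P : ℂ[X]) :
    Integrable fun t : ℝ ↦ ‖P.eval (t : ℂ)‖ * Real.exp (-|t| ^ α) := by
  obtain ⟨B, hB⟩ := exists_norm_eval_mul_exp_neg_rpow_le hα ((1 + X ^ 2) * P)
  have hcont : Continuous fun t : ℝ ↦ ‖P.eval (t : ℂ)‖ * Real.exp (-|t| ^ α) := by
    have := P.continuous
    fun_prop (disch := exact hα.le)
  refine (integrable_inv_one_add_sq.const_mul B).mono' hcont.aestronglyMeasurable <|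
    .of_forall fun t ↦ ?_
  have hnorm : ‖(1 + t ^ 2 : ℂ)‖ = 1 + t ^ 2 := by
    rw [← ofReal_one, ← ofReal_pow, ← ofReal_add, norm_real,
      Real.norm_of_nonneg (by positivity)]
  have hbound := hB t
  rw [eval_mul, eval_add, eval_one, eval_pow, eval_X, norm_mul, hnorm, norm_real,
    Real.norm_eq_abs] at hbound
  rw [Real.norm_of_nonneg (by positivity), ← div_eq_mul_inv, le_div_iff₀' (by positivity)]
  linarith

theorem norm_eval_mul_exp_mul_pi_mul_im_le (hα : α ∈ Ioo 0 1) (P : ℂ[X]) {z : ℂ} (hz : 0 < z.im) :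
    ‖P.eval z‖ * Real.exp (-(‖z‖ ^ α / Real.cos (π * α / 2))) * (π * z.im) ≤
      ∫ t : ℝ, ‖P.eval (t : ℂ)‖ * Real.exp (-|t| ^ α) := by
  obtain ⟨B, hB⟩ := exists_norm_eval_mul_exp_neg_rpow_le hα.1 P
  set G : ℂ → ℂ := fun w ↦ P.eval w * holomorphicWeight α w
  have hG : DiffContOnCl ℂ G {w | 0 < w.im} :=
    P.differentiable.diffContOnCl.smul (diffContOnCl_holomorphicWeight hα.1)
  have hGle (w : ℂ) (hw : 0 ≤ w.im) : ‖G w‖ ≤ ‖P.eval w‖ * Real.exp (-‖w‖ ^ α) := by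
    rw [norm_mul]
    gcongr
    exact norm_holomorphicWeight_le hα hw
  have hGreal (t : ℝ) : ‖G t‖ ≤ ‖P.eval (t : ℂ)‖ * Real.exp (-|t| ^ α) := by
    simpa using hGle t (by simp)
  have hmaj := integrable_norm_eval_mul_exp_neg_rpow hα.1 P
  have hint : Integrable fun t : ℝ ↦ G t := by
    have hcont : ContinuousOn G {w | 0 ≤ w.im} := by simpa using hG.continuousOn
    exact hmaj.mono' (hcont.comp_continuous continuous_ofReal (by simp)).aestronglyMeasurable
      (.of_forall hGreal)
  calc
    ‖P.eval z‖ * Real.exp (-(‖z‖ ^ α / Real.cos (π * α / 2))) * (π * z.im)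
      ≤ ‖G z‖ * (π * z.im) := by
        rw [norm_mul]
        gcongr
        exact le_norm_holomorphicWeight hα z
    _ ≤ ∫ t : ℝ, ‖G t‖ :=
        norm_mul_pi_mul_im_le_integral_norm hG (fun w hw ↦ (hGle w hw).trans (hB w)) hint hz
    _ ≤ ∫ t : ℝ, ‖P.eval (t : ℂ)‖ * Real.exp (-|t| ^ α) := integral_mono hint.norm hmaj hGreal

end Weight

section HalfLine

variable {γ : ℝ}

theorem integral_abs_mul_comp_sq (g : ℝ → ℝ) : ∫ t, |t| * g (t ^ 2) = ∫ t in Ioi 0, g t := by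
  calc
    ∫ t, |t| * g (t ^ 2) = 2 * ∫ t in Ioi 0, t * g (t ^ 2) := by
      simp_rw [← integral_comp_abs (f := fun t ↦ t * g (t ^ 2)), sq_abs]
    _ = ∫ t in Ioi 0, g t := by
      rw [← integral_comp_rpow_Ioi_of_pos (g := g) two_pos, ← integral_const_mul]
      norm_num [mul_assoc]

theorem integral_norm_eval_X_mul_expand_two (p : ℂ[X]) (γ : ℝ) :
    ∫ t : ℝ, ‖(X * expand ℂ 2 p).eval (t : ℂ)‖ * Real.exp (-|t| ^ (2 * γ)) =
      ∫ t in Ioi (0 : ℝ), ‖p.eval (t : ℂ)‖ * Real.exp (-(t ^ γ)) := by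
  rw [← integral_abs_mul_comp_sq]
  congr 1 with t
  rw [eval_mul, eval_X, expand_eval, norm_mul, norm_real, Real.norm_eq_abs, ofReal_pow, mul_assoc,
    Real.rpow_mul (abs_nonneg t), Real.rpow_two, sq_abs]

theorem exists_sq_eq_and_im_pos {w : ℂ} (hw : w.im ≠ 0) : ∃ z : ℂ, z ^ 2 = w ∧ 0 < z.im := by
  obtain ⟨z, rfl⟩ := IsAlgClosed.exists_pow_nat_eq w two_pos
  have hz : z.im ≠ 0 := fun h ↦ hw (by simp [pow_two, h])
  rcases hz.lt_or_gt with hneg | hpos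
  · exact ⟨-z, neg_sq z, by simpa using hneg⟩
  · exact ⟨z, rfl, hpos⟩

theorem norm_eval_mul_abs_im_le (hγ : γ ∈ Ioo 0 (1 / 2)) (p : ℂ[X]) (w : ℂ) :
    ‖p.eval w‖ * |w.im| ≤ 2 / π * Real.exp (‖w‖ ^ γ / Real.cos (π * γ)) *
      ∫ t in Ioi (0 : ℝ), ‖p.eval (t : ℂ)‖ * Real.exp (-(t ^ γ)) := by
  rcases eq_or_ne w.im 0 with hw | hw
  · rw [hw, abs_zero, mul_zero]
    positivity
  obtain ⟨z, rfl, hz⟩ := exists_sq_eq_and_im_pos hw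
  have hα : 2 * γ ∈ Ioo 0 1 := ⟨by linarith [hγ.1], by linarith [hγ.2]⟩
  have hbound := norm_eval_mul_exp_mul_pi_mul_im_le hα (X * expand ℂ 2 p) hz
  have hsq : ‖z‖ ^ (2 * γ) = ‖z ^ 2‖ ^ γ := by
    rw [Real.rpow_mul (norm_nonneg z), Real.rpow_two, norm_pow]
  have him : |(z ^ 2).im| ≤ 2 * ‖z‖ * z.im := by
    have him_eq : (z ^ 2).im = 2 * z.re * z.im := by
      rw [pow_two, mul_im]
      ring
    rw [him_eq, abs_mul, abs_mul, abs_two, abs_of_pos hz]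
    gcongr
    exact abs_re_le_norm z
  rw [integral_norm_eval_X_mul_expand_two, eval_mul, eval_X, expand_eval, norm_mul, hsq,
    show π * (2 * γ) / 2 = π * γ by ring, Real.exp_neg] at hbound
  set e := Real.exp (‖z ^ 2‖ ^ γ / Real.cos (π * γ))
  have he : e ≠ 0 := (Real.exp_pos _).ne'
  calc
    ‖p.eval (z ^ 2)‖ * |(z ^ 2).im| ≤ ‖p.eval (z ^ 2)‖ * (2 * ‖z‖ * z.im) := by gcongr
    _ = 2 / π * e * (‖z‖ * ‖p.eval (z ^ 2)‖ * e⁻¹ * (π * z.im)) := by field_simp [he]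
    _ ≤ 2 / π * e * ∫ t in Ioi (0 : ℝ), ‖p.eval (t : ℂ)‖ * Real.exp (-(t ^ γ)) := by gcongr

theorem one_sided_bernstein_nikolskii_general (hγ : γ ∈ Ioo 0 (1 / 2)) (R : ℝ) :
    ∃ M > 0, ∀ p : ℂ[X], ∀ x : ℂ, ‖x‖ ≤ R →
      ‖p.derivative.eval x‖ ≤
        M * ∫ t in Ioi (0 : ℝ), ‖p.eval (t : ℂ)‖ * Real.exp (-(t ^ γ)) := by
  set r := |R| + 2
  set ρ := |R| + 1
  have hrρ : 0 < r ^ 2 - ρ ^ 2 := by nlinarith [abs_nonneg R]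
  set K := 2 / π * Real.exp (r ^ γ / Real.cos (π * γ))
  refine ⟨2 * r * K / (r ^ 2 - ρ ^ 2), by positivity, fun p x hx ↦ ?_⟩
  set J := ∫ t in Ioi (0 : ℝ), ‖p.eval (t : ℂ)‖ * Real.exp (-(t ^ γ))
  have hsphere (v : ℂ) (hv : v ∈ sphere 0 r) : ‖p.eval v‖ * |(v - 0).im| ≤ K * J := by
    rw [sub_zero]
    simpa only [mem_sphere_zero_iff_norm.1 hv] using norm_eval_mul_abs_im_le hγ p v
  have hderiv := norm_deriv_le_of_norm_mul_abs_im_le one_pos (ρ := ρ) (x := x)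
    (by rw [sub_zero]; linarith [le_abs_self R]) (by linarith)
    p.differentiable.diffContOnCl hsphere
  rw [Polynomial.deriv] at hderiv
  calc
    ‖p.derivative.eval x‖ ≤ 2 * r * (K * J) / (r ^ 2 - ρ ^ 2) / 1 := hderiv
    _ = 2 * r * K / (r ^ 2 - ρ ^ 2) * J := by ring

end HalfLine

theorem norm_eval_map_ofRealHom (q : ℝ[X]) (t : ℝ) :
    ‖(q.map ofRealHom).eval (t : ℂ)‖ = |q.eval t| := by
  rw [← ofRealHom_eq_coe, eval_map_apply, ofRealHom_eq_coe, norm_real, Real.norm_eq_abs]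

theorem one_sided_bernstein_nikolskii (γ : ℝ) (hγ : γ ∈ Set.Ioo (0 : ℝ) (1 / 2)) :
    ∃ M > 0, ∀ q : Polynomial ℝ, ∀ x : ℝ, |x - 1| ≤ 1 / 4 →
      |q.derivative.eval x| ≤
        M * ∫ t in Set.Ioi (0 : ℝ), |q.eval t| * Real.exp (-(t ^ γ)) := by
  obtain ⟨M, hM, hbound⟩ := one_sided_bernstein_nikolskii_general hγ (5 / 4)
  refine ⟨M, hM, fun q x hx ↦ ?_⟩
  have hx' : ‖(x : ℂ)‖ ≤ 5 / 4 := by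
    rw [norm_real, Real.norm_eq_abs]
    linarith [abs_sub_abs_le_abs_sub x 1, abs_one (α := ℝ)]
  simpa only [derivative_map, norm_eval_map_ofRealHom] using hbound (q.map ofRealHom) x hx'
end

section
/- Let μ be a probability measure on ℝ that is absolutely continuous with respect to Lebesgue measure with density w, and suppose there exist a constant C > 0 and an exponent γ ∈ (0, 1/2) such that w(x) ≥ C·exp(−|x|^γ) for almost every x ∈ (−∞, 1]. Then there exists a constant K > 0 (depending on μ) such that for every real polynomial q: sup over x ∈ [−1/4, 1/4] of |q'(x)| is at most K·∫ |q(x)| dμ(x). -/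
open MeasureTheory ProbabilityTheory

/-!
The substitution `t = b + s ^ 2` carries the half-line `(-∞, b]` to the imaginary axis and the
weight `exp (-(b - t) ^ γ)` to `exp (-|s| ^ (2 * γ))`. Since `2 * γ < 1`, the latter is the boundary
modulus of the zero-free function `exp (-s ^ (2 * γ) / cos (π * γ))` on the right half-plane, and
this function decays fast enough to kill every polynomial at infinity. Multiplying the pulled-back
polynomial by it and applying the Poisson formula bounds `|q z| * |Im z|` by the weighted `L¹` norm
of `q` on the half-line, with a constant locally uniform in `z`. The singularity at the real axis
disappears in Cauchy's estimate for `q z * ((z - x) ^ 2 - r ^ 2)`, because the second factor has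
modulus `2 * r * |Im z|` on the circle `|z - x| = r`; its value `-r ^ 2` and derivative `0` at the
centre leave `-r ^ 2 * q' x`.
-/

section

open Bornology Complex ComplexConjugate Filter Metric Polynomial Set Topology
open scoped ENNReal Real

section HalfPlane

/-- The Möbius transformation sending `0` to `s` and `-1` to `∞`, which for `0 < s.re` maps the unit
disc onto the right half-plane. -/
noncomputable def discToHalfPlane (s z : ℂ) : ℂ :=
  (s - conj s * z) / (1 + z)

lemma one_add_ne_zero {z : ℂ} (hz : z ≠ -1) : 1 + z ≠ 0 := by
  simpa [add_comm, eq_neg_iff_add_eq_zero] using hz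

lemma discToHalfPlane_re (s : ℂ) {z : ℂ} (hz : z ≠ -1) :
    (discToHalfPlane s z).re = s.re * (1 - ‖z‖ ^ 2) / ‖1 + z‖ ^ 2 := by
  have hden : normSq (1 + z) ≠ 0 := normSq_eq_zero.not.2 (one_add_ne_zero hz)
  rw [discToHalfPlane, Complex.sq_norm, Complex.sq_norm, div_re, eq_div_iff hden, add_mul,
    div_mul_cancel₀ _ hden, div_mul_cancel₀ _ hden]
  simp only [normSq_apply, sub_re, sub_im, mul_re, mul_im, conj_re, conj_im, add_re, add_im, one_re,
    one_im]
  ring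

lemma discToHalfPlane_re_pos {s z : ℂ} (hs : 0 < s.re) (hz : z ≠ -1) (hz1 : ‖z‖ < 1) :
    0 < (discToHalfPlane s z).re := by
  have hnorm : 0 < ‖1 + z‖ := norm_pos_iff.2 (one_add_ne_zero hz)
  have hsq : 0 < 1 - ‖z‖ ^ 2 := sub_pos.2 (pow_lt_one₀ (norm_nonneg z) hz1 two_ne_zero)
  rw [discToHalfPlane_re s hz]
  positivity

lemma discToHalfPlane_re_nonneg {s z : ℂ} (hs : 0 ≤ s.re) (hz : z ≠ -1) (hz1 : ‖z‖ ≤ 1) :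
    0 ≤ (discToHalfPlane s z).re := by
  have hsq : 0 ≤ 1 - ‖z‖ ^ 2 := sub_nonneg.2 (pow_le_one₀ (norm_nonneg z) hz1)
  rw [discToHalfPlane_re s hz]
  positivity

lemma differentiableAt_discToHalfPlane (s : ℂ) {z : ℂ} (hz : z ≠ -1) :
    DifferentiableAt ℂ (discToHalfPlane s) z := by
  have hden := one_add_ne_zero hz
  unfold discToHalfPlane
  fun_prop (disch := assumption)

lemma circleMap_zero_one_eq_sq (θ : ℝ) :
    circleMap 0 1 θ = (Real.cos (θ / 2) + Real.sin (θ / 2) * I) ^ 2 := by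
  rw [ofReal_cos, ofReal_sin, ← exp_mul_I, ← Complex.exp_nat_mul, circleMap_zero, ofReal_one,
    one_mul]
  push_cast
  ring_nf

lemma discToHalfPlane_circleMap (s : ℂ) {θ : ℝ} (hθ : Real.cos (θ / 2) ≠ 0) :
    circleMap 0 1 θ ≠ -1 ∧
      discToHalfPlane s (circleMap 0 1 θ) = ↑(s.im - s.re * Real.tan (θ / 2)) * I := by
  set c := Real.cos (θ / 2) with hc
  set σ := Real.sin (θ / 2) with hσ
  have hc0 : (c : ℂ) ≠ 0 := ofReal_ne_zero.2 hθ
  have hone : (c : ℂ) ^ 2 + (σ : ℂ) ^ 2 = 1 := mod_cast Real.cos_sq_add_sin_sq (θ / 2)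
  have he : (c + σ * I : ℂ) ≠ 0 := fun h ↦ hθ <| by simpa using congrArg re h
  have hden : 1 + circleMap 0 1 θ = 2 * c * (c + σ * I) := by
    rw [circleMap_zero_one_eq_sq, ← hc, ← hσ]
    linear_combination (σ : ℂ) ^ 2 * I_sq - hone
  have hnum : s - conj s * circleMap 0 1 θ = 2 * (s.im * c - s.re * σ) * I * (c + σ * I) := by
    rw [circleMap_zero_one_eq_sq, ← hc, ← hσ]
    have hconj : conj s = s.re - s.im * I := by
      apply Complex.ext <;> simp
    rw [hconj]
    linear_combination (s.re + s.im * I) * (σ : ℂ) ^ 2 * I_sq - (s.re + s.im * I) * hone -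
      re_add_im s
  constructor
  · intro h
    simp [h, hc0, he] at hden
  · rw [discToHalfPlane, hden, hnum, Real.tan_eq_sin_div_cos, ← hc, ← hσ]
    push_cast
    field_simp

lemma tendsto_discToHalfPlane_cobounded {s : ℂ} (hs : s.re ≠ 0) :
    Tendsto (discToHalfPlane s) (𝓝[≠] (-1)) (cobounded ℂ) := by
  have hnum : Tendsto (fun z ↦ s - conj s * z) (𝓝[≠] (-1)) (𝓝 (2 * s.re : ℝ)) := by
    have : Continuous fun z ↦ s - conj s * z := by fun_prop
    convert this.continuousWithinAt.tendsto using 2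
    rw [mul_neg_one, sub_neg_eq_add, add_conj]
  have hden : Tendsto (fun z : ℂ ↦ 1 + z) (𝓝[≠] (-1)) (𝓝[≠] 0) := by
    refine tendsto_nhdsWithin_iff.2 ⟨?_, eventually_mem_nhdsWithin.mono fun z ↦ one_add_ne_zero⟩
    have : Continuous fun z : ℂ ↦ 1 + z := by fun_prop
    convert this.continuousWithinAt.tendsto using 2
    norm_num
  rw [← tendsto_norm_atTop_iff_cobounded]
  simpa only [discToHalfPlane, div_eq_mul_inv, norm_mul] using!
    hnum.norm.pos_mul_atTop (by simpa using hs)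
      (tendsto_norm_cobounded_atTop.comp (tendsto_inv₀_nhdsNE_zero.comp hden))

lemma continuousOn_update_comp_discToHalfPlane {X : Type*} [TopologicalSpace X] {f : ℂ → X} {c : X}
    {s : ℂ} (hs : 0 < s.re) (hf : ContinuousOn f {z | 0 ≤ z.re})
    (hfc : Tendsto f (cobounded ℂ ⊓ 𝓟 {z | 0 ≤ z.re}) (𝓝 c)) :
    ContinuousOn (Function.update (f ∘ discToHalfPlane s) (-1) c) (closedBall 0 1) := by
  have hmaps : MapsTo (discToHalfPlane s) (closedBall 0 1 \ {-1}) {z | 0 ≤ z.re} :=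
    fun z hz ↦ discToHalfPlane_re_nonneg hs.le hz.2 (by simpa using hz.1)
  refine continuousOn_update_iff.2 ⟨?_, fun _ ↦ hfc.comp (tendsto_inf.2 ⟨?_, ?_⟩)⟩
  · exact hf.comp (fun z hz ↦ (differentiableAt_discToHalfPlane s hz.2).continuousAt
      |>.continuousWithinAt) hmaps
  · exact (tendsto_discToHalfPlane_cobounded hs.ne').mono_left
      (nhdsWithin_mono _ fun z hz ↦ hz.2)
  · exact tendsto_principal.2 (eventually_mem_nhdsWithin.mono hmaps)

variable {E : Type*} [NormedAddCommGroup E] [NormedSpace ℂ E] {f : ℂ → E}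

lemma differentiableOn_update_comp_discToHalfPlane {s : ℂ} (hs : 0 < s.re)
    (hf : DifferentiableOn ℂ f {z | 0 < z.re}) (c : E) :
    DifferentiableOn ℂ (Function.update (f ∘ discToHalfPlane s) (-1) c) (ball 0 1) := by
  have hne {z : ℂ} (hz : z ∈ ball (0 : ℂ) 1) : z ≠ -1 := by
    rintro rfl
    simp at hz
  have hcomp : DifferentiableOn ℂ (f ∘ discToHalfPlane s) (ball 0 1) := by
    refine hf.comp (fun z hz ↦ ?_) fun z hz ↦ discToHalfPlane_re_pos hs (hne hz) (by simpa using hz)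
    exact (differentiableAt_discToHalfPlane s (hne hz)).differentiableWithinAt
  exact hcomp.congr fun z hz ↦ Function.update_of_ne (hne hz) _ _

lemma enorm_le_lintegral_circle [CompleteSpace E] {c : ℂ} {R : ℝ}
    (hf : DiffContOnCl ℂ f (ball c |R|)) :
    ‖f c‖ₑ ≤ ENNReal.ofReal (2 * π)⁻¹ * ∫⁻ θ in Ioo (-π) π, ‖f (circleMap c R θ)‖ₑ := by
  have hper : Function.Periodic (fun θ ↦ f (circleMap c R θ)) (2 * π) :=
    (periodic_circleMap c R).comp f
  have hshift := hper.intervalIntegral_add_eq 0 (-π)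
  rw [zero_add, show -π + 2 * π = π by ring, intervalIntegral.integral_of_le (a := -π)
    (by linarith [Real.pi_pos]), integral_Ioc_eq_integral_Ioo] at hshift
  rw [← hf.circleAverage, Real.circleAverage_def, hshift, enorm_smul, Real.enorm_of_nonneg
    (by positivity)]
  gcongr
  exact enorm_integral_le_lintegral_enorm _

lemma lintegral_comp_tan_half_le {a : ℝ} (ha : 0 < a) (b : ℝ) (F : ℝ → ℝ≥0∞) :
    ∫⁻ θ in Ioo (-π) π, F (b - a * Real.tan (θ / 2)) ≤ ENNReal.ofReal (2 / a) * ∫⁻ y, F y := by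
  have hmem {θ : ℝ} (hθ : θ ∈ Ioo (-π) π) : θ / 2 ∈ Ioo (-(π / 2)) (π / 2) :=
    ⟨by linarith [hθ.1], by linarith [hθ.2]⟩
  have hcos {θ : ℝ} (hθ : θ ∈ Ioo (-π) π) : 0 < Real.cos (θ / 2) :=
    Real.cos_pos_of_mem_Ioo (hmem hθ)
  have hderiv : ∀ θ ∈ Ioo (-π) π, HasDerivWithinAt (fun θ ↦ b - a * Real.tan (θ / 2))
      (-(a / (2 * Real.cos (θ / 2) ^ 2))) (Ioo (-π) π) θ := by
    intro θ hθ
    have htan := (Real.hasDerivAt_tan (hcos hθ).ne').comp θ ((hasDerivAt_id θ).div_const 2)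
    refine ((htan.const_mul a).const_sub b).congr_deriv ?_ |>.hasDerivWithinAt
    field_simp
  have hinj : InjOn (fun θ ↦ b - a * Real.tan (θ / 2)) (Ioo (-π) π) := fun θ hθ η hη h ↦ by
    have htan : Real.tan (θ / 2) = Real.tan (η / 2) := by simpa [ha.ne'] using h
    linarith [Real.injOn_tan (hmem hθ) (hmem hη) htan]
  have hjac {θ : ℝ} (hθ : θ ∈ Ioo (-π) π) :
      1 ≤ 2 / a * |-(a / (2 * Real.cos (θ / 2) ^ 2))| := by
    have hpos := hcos hθ
    have hle : Real.cos (θ / 2) ^ 2 ≤ 1 := Real.cos_sq_le_one _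
    rw [abs_neg, abs_of_pos (by positivity)]
    field_simp
    exact hle
  calc ∫⁻ θ in Ioo (-π) π, F (b - a * Real.tan (θ / 2))
      ≤ ∫⁻ θ in Ioo (-π) π, ENNReal.ofReal (2 / a) *
          (ENNReal.ofReal |-(a / (2 * Real.cos (θ / 2) ^ 2))| *
            F (b - a * Real.tan (θ / 2))) := by
        refine setLIntegral_mono' measurableSet_Ioo fun θ hθ ↦ ?_
        rw [← mul_assoc, ← ENNReal.ofReal_mul (by positivity)]
        exact le_mul_of_one_le_left' (ENNReal.one_le_ofReal.2 (hjac hθ))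
    _ = ENNReal.ofReal (2 / a) *
          ∫⁻ y in (fun θ ↦ b - a * Real.tan (θ / 2)) '' Ioo (-π) π, F y := by
        rw [lintegral_const_mul' _ _ ENNReal.ofReal_ne_top,
          lintegral_image_eq_lintegral_abs_deriv_mul measurableSet_Ioo hderiv hinj]
    _ ≤ ENNReal.ofReal (2 / a) * ∫⁻ y, F y := by
        gcongr
        exact Measure.restrict_le_self

theorem enorm_le_lintegral_imaginary_axis [CompleteSpace E] {s : ℂ} (hs : 0 < s.re)
    (hf : DiffContOnCl ℂ f {z | 0 < z.re})
    (hf0 : Tendsto f (cobounded ℂ ⊓ 𝓟 {z | 0 ≤ z.re}) (𝓝 0)) :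
    ‖f s‖ₑ ≤ ENNReal.ofReal (π * s.re)⁻¹ * ∫⁻ y : ℝ, ‖f (y * I)‖ₑ := by
  set g := Function.update (f ∘ discToHalfPlane s) (-1) 0 with hg
  have hgd : DiffContOnCl ℂ g (ball 0 |1|) := by
    rw [abs_one]
    have hfc := hf.continuousOn
    rw [closure_setOfPred_lt_re] at hfc
    exact .mk_ball (differentiableOn_update_comp_discToHalfPlane hs hf.differentiableOn 0)
      (continuousOn_update_comp_discToHalfPlane hs hfc hf0)
  have hg0 : g 0 = f s := by simp [hg, Function.update_of_ne, discToHalfPlane]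
  have hgcircle : ∀ θ ∈ Ioo (-π) π,
      g (circleMap 0 1 θ) = f (↑(s.im - s.re * Real.tan (θ / 2)) * I) := fun θ hθ ↦ by
    have hcos : Real.cos (θ / 2) ≠ 0 :=
      (Real.cos_pos_of_mem_Ioo ⟨by linarith [hθ.1], by linarith [hθ.2]⟩).ne'
    obtain ⟨hne, heq⟩ := discToHalfPlane_circleMap s hcos
    rw [hg, Function.update_of_ne hne, Function.comp_apply, heq]
  calc ‖f s‖ₑ
      ≤ ENNReal.ofReal (2 * π)⁻¹ * ∫⁻ θ in Ioo (-π) π, ‖g (circleMap 0 1 θ)‖ₑ :=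
        hg0 ▸ enorm_le_lintegral_circle hgd
    _ = ENNReal.ofReal (2 * π)⁻¹ *
          ∫⁻ θ in Ioo (-π) π, ‖f (↑(s.im - s.re * Real.tan (θ / 2)) * I)‖ₑ := by
        congr 1
        exact setLIntegral_congr_fun measurableSet_Ioo fun θ hθ ↦ by rw [hgcircle θ hθ]
    _ ≤ ENNReal.ofReal (2 * π)⁻¹ *
          (ENNReal.ofReal (2 / s.re) * ∫⁻ y : ℝ, ‖f (y * I)‖ₑ) := by
        gcongr
        exact lintegral_comp_tan_half_le hs s.im fun y ↦ ‖f (y * I)‖ₑ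
    _ = ENNReal.ofReal (π * s.re)⁻¹ * ∫⁻ y : ℝ, ‖f (y * I)‖ₑ := by
        rw [← mul_assoc, ← ENNReal.ofReal_mul (by positivity)]
        congr 2
        field_simp

end HalfPlane

section SubexpWeight

/-- The outer function of the right half-plane with modulus `exp (-|y| ^ β)` at the boundary point
`y * I`. It carries the weight from the boundary into the half-plane holomorphically. -/
noncomputable def subexpWeight (β : ℝ) (s : ℂ) : ℂ :=
  exp (-(s ^ (β : ℂ) / Real.cos (β * (π / 2))))

variable {β : ℝ}

lemma norm_subexpWeight (β : ℝ) (s : ℂ) :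
    ‖subexpWeight β s‖ =
      Real.exp (-(‖s‖ ^ β * Real.cos (s.arg * β) / Real.cos (β * (π / 2)))) := by
  rw [subexpWeight, norm_exp, neg_re, div_ofReal_re, cpow_ofReal_re]

lemma cos_mul_pi_div_two_pos (hβ0 : 0 < β) (hβ1 : β < 1) : 0 < Real.cos (β * (π / 2)) :=
  Real.cos_pos_of_mem_Ioo ⟨by nlinarith [Real.pi_pos], by nlinarith [Real.pi_pos]⟩

lemma norm_subexpWeight_le (hβ0 : 0 < β) (hβ1 : β < 1) {s : ℂ} (hs : 0 ≤ s.re) :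
    ‖subexpWeight β s‖ ≤ Real.exp (-‖s‖ ^ β) := by
  have hcos : Real.cos (β * (π / 2)) ≤ Real.cos (s.arg * β) := by
    rw [← Real.cos_abs (s.arg * β), abs_mul, abs_of_pos hβ0, mul_comm |s.arg|]
    have harg : |s.arg| ≤ π / 2 := abs_arg_le_pi_div_two_iff.2 hs
    exact Real.cos_le_cos_of_nonneg_of_le_pi (by positivity) (by nlinarith [Real.pi_pos])
      (by gcongr)
  rw [norm_subexpWeight, Real.exp_le_exp, neg_le_neg_iff,
    le_div_iff₀ (cos_mul_pi_div_two_pos hβ0 hβ1)]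
  gcongr

lemma exp_neg_le_norm_subexpWeight (hβ0 : 0 < β) (hβ1 : β < 1) (s : ℂ) :
    Real.exp (-(‖s‖ ^ β / Real.cos (β * (π / 2)))) ≤ ‖subexpWeight β s‖ := by
  have hpos := cos_mul_pi_div_two_pos hβ0 hβ1
  rw [norm_subexpWeight]
  gcongr
  exact mul_le_of_le_one_right (by positivity) (Real.cos_le_one _)

lemma diffContOnCl_subexpWeight (hβ : 0 < β) : DiffContOnCl ℂ (subexpWeight β) {s | 0 < s.re} := by
  unfold subexpWeight
  refine Complex.differentiable_exp.comp_diffContOnCl ⟨fun s hs ↦ ?_, ?_⟩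
  · exact ((differentiableAt_id.cpow_const (Or.inl hs)).div_const _).neg.differentiableWithinAt
  · rw [closure_setOfPred_lt_re]
    intro s hs
    exact ((continuousAt_cpow_const_of_re_pos (Or.inl hs) (by simpa using hβ)).div_const
      _).neg.continuousWithinAt

lemma tendsto_pow_mul_exp_neg_rpow (hβ : 0 < β) (n : ℕ) :
    Tendsto (fun x : ℝ ↦ x ^ n * Real.exp (-x ^ β)) atTop (𝓝 0) := by
  refine ((tendsto_rpow_mul_exp_neg_mul_atTop_nhds_zero (n / β) 1 one_pos).comp
    (tendsto_rpow_atTop hβ)).congr' ?_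
  filter_upwards [eventually_ge_atTop 0] with x hx
  rw [Function.comp_apply, ← Real.rpow_mul hx, mul_div_cancel₀ _ hβ.ne', Real.rpow_natCast,
    neg_one_mul]

lemma tendsto_norm_eval_mul_exp_neg_rpow (hβ : 0 < β) (P : ℂ[X]) :
    Tendsto (fun s ↦ ‖P.eval s‖ * Real.exp (-‖s‖ ^ β)) (cobounded ℂ) (𝓝 0) := by
  induction P using Polynomial.induction_on' with
  | add P Q hP hQ =>
    refine squeeze_zero (fun _ ↦ by positivity) (fun s ↦ ?_) (by simpa using hP.add hQ)
    rw [← add_mul, eval_add]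
    gcongr
    exact norm_add_le _ _
  | monomial n a =>
    simpa [mul_assoc, Function.comp_def] using
      ((tendsto_pow_mul_exp_neg_rpow hβ n).comp tendsto_norm_cobounded_atTop).const_mul ‖a‖

lemma tendsto_eval_mul_subexpWeight (hβ0 : 0 < β) (hβ1 : β < 1) (P : ℂ[X]) :
    Tendsto (fun s ↦ P.eval s * subexpWeight β s) (cobounded ℂ ⊓ 𝓟 {s | 0 ≤ s.re}) (𝓝 0) := by
  refine squeeze_zero_norm' (eventually_inf_principal.2 (.of_forall fun s hs ↦ ?_))
    ((tendsto_norm_eval_mul_exp_neg_rpow hβ0 P).mono_left inf_le_left)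
  rw [norm_mul]
  gcongr
  exact norm_subexpWeight_le hβ0 hβ1 hs

end SubexpWeight

section PointwiseBound

lemma exists_sq_eq_re_pos {w : ℂ} (hw : w.im ≠ 0) : ∃ s : ℂ, s ^ 2 = w ∧ 0 < s.re := by
  obtain ⟨s, rfl⟩ := IsAlgClosed.exists_pow_nat_eq w two_pos
  have hre : s.re ≠ 0 := fun h ↦ hw (by simp [sq, h])
  rcases hre.lt_or_gt with hneg | hpos
  · exact ⟨-s, neg_sq s, by simpa using hneg⟩
  · exact ⟨s, rfl, hpos⟩

lemma lintegral_enorm_mul_comp_sub_sq_of_injOn {S : Set ℝ} (hS : MeasurableSet S)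
    (hinj : InjOn (fun y : ℝ ↦ y ^ 2) S) (b : ℝ) (F : ℝ → ℝ≥0∞) :
    2 * ∫⁻ y in S, ‖y‖ₑ * F (b - y ^ 2) = ∫⁻ t in (fun y ↦ b - y ^ 2) '' S, F t := by
  have hderiv : ∀ y ∈ S, HasDerivWithinAt (fun y ↦ b - y ^ 2) (-(2 * y)) S y := fun y _ ↦ by
    simpa using! ((hasDerivAt_pow 2 y).const_sub b).hasDerivWithinAt
  have hinj' : InjOn (fun y : ℝ ↦ b - y ^ 2) S := fun y hy z hz h ↦ hinj hy hz (by simpa using h)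
  rw [lintegral_image_eq_lintegral_abs_deriv_mul hS hderiv hinj',
    ← lintegral_const_mul' _ _ ENNReal.ofNat_ne_top]
  refine lintegral_congr fun y ↦ ?_
  rw [abs_neg, abs_mul, abs_two, ENNReal.ofReal_mul zero_le_two, ← Real.norm_eq_abs, ofReal_norm,
    ENNReal.ofReal_ofNat, mul_assoc]

lemma lintegral_enorm_mul_comp_sub_sq (b : ℝ) (F : ℝ → ℝ≥0∞) :
    ∫⁻ y, ‖y‖ₑ * F (b - y ^ 2) = ∫⁻ t in Iic b, F t := by
  have himage_Ici : (fun y ↦ b - y ^ 2) '' Ici 0 = Iic b := by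
    ext t
    refine ⟨?_, fun ht ↦ ⟨√(b - t), Real.sqrt_nonneg _, ?_⟩⟩
    · rintro ⟨y, -, rfl⟩
      exact sub_le_self b (sq_nonneg y)
    · simp [Real.sq_sqrt (sub_nonneg.2 ht)]
  have himage_Iic : (fun y ↦ b - y ^ 2) '' Iic 0 = Iic b := by
    rw [← himage_Ici, ← neg_zero, ← Set.image_neg_Ici, Set.image_image]
    simp
  have hright := lintegral_enorm_mul_comp_sub_sq_of_injOn measurableSet_Ici
    (pow_left_strictMonoOn₀ (M₀ := ℝ) two_ne_zero).injOn b F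
  have hleft := lintegral_enorm_mul_comp_sub_sq_of_injOn measurableSet_Iic
    (fun y hy z hz h ↦ neg_injective <|
      (sq_eq_sq₀ (neg_nonneg.2 hy) (neg_nonneg.2 hz)).1 (by simpa using h)) b F
  rw [himage_Ici] at hright
  rw [himage_Iic] at hleft
  refine (ENNReal.mul_right_inj two_ne_zero ENNReal.ofNat_ne_top).1 ?_
  rw [← lintegral_add_compl _ measurableSet_Iic (A := Iic 0), compl_Iic,
    setLIntegral_congr Ioi_ae_eq_Ici, mul_add, hleft, hright, two_mul]

variable {γ : ℝ}

/-- The pull-back of `q` under `s ↦ b + s ^ 2`, which maps the imaginary axis onto the half-line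
`(-∞, b]`. The factor `s` accounts for the Jacobian, and the weight has modulus
`exp (-(b - t) ^ γ)` over the point `t` of the half-line. -/
noncomputable def weightedPullback (b γ : ℝ) (q : ℂ[X]) (s : ℂ) : ℂ :=
  (q.comp (C (b : ℂ) + X ^ 2) * X).eval s * subexpWeight (2 * γ) s

lemma norm_weightedPullback (b γ : ℝ) (q : ℂ[X]) (s : ℂ) :
    ‖weightedPullback b γ q s‖ = ‖q.eval (b + s ^ 2)‖ * ‖s‖ * ‖subexpWeight (2 * γ) s‖ := by
  simp [weightedPullback]

lemma diffContOnCl_weightedPullback (hγ : 0 < γ) (b : ℝ) (q : ℂ[X]) :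
    DiffContOnCl ℂ (weightedPullback b γ q) {s | 0 < s.re} :=
  (Polynomial.differentiable _).diffContOnCl.smul (diffContOnCl_subexpWeight (by positivity))

lemma tendsto_weightedPullback (hγ : γ ∈ Ioo 0 (1 / 2)) (b : ℝ) (q : ℂ[X]) :
    Tendsto (weightedPullback b γ q) (cobounded ℂ ⊓ 𝓟 {s | 0 ≤ s.re}) (𝓝 0) :=
  tendsto_eval_mul_subexpWeight (by linarith [hγ.1]) (by linarith [hγ.2]) _

lemma lintegral_weightedPullback_le (hγ : γ ∈ Ioo 0 (1 / 2)) (b : ℝ) (q : ℂ[X]) :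
    ∫⁻ y : ℝ, ‖weightedPullback b γ q (y * I)‖ₑ ≤
      ∫⁻ t in Iic b, ‖q.eval (t : ℂ)‖ₑ * ENNReal.ofReal (Real.exp (-(b - t) ^ γ)) := by
  rw [← lintegral_enorm_mul_comp_sub_sq]
  refine lintegral_mono fun y ↦ ?_
  have hweight := norm_subexpWeight_le (β := 2 * γ) (s := y * I) (by linarith [hγ.1])
    (by linarith [hγ.2]) (by simp)
  have hpow : ‖(y * I : ℂ)‖ ^ (2 * γ) = (b - (b - y ^ 2)) ^ γ := by
    rw [sub_sub_cancel, ← sq_abs, Real.rpow_mul (norm_nonneg _)]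
    simp
  have hbase : (b + (y * I) ^ 2 : ℂ) = ↑(b - y ^ 2) := by
    rw [mul_pow, I_sq]
    push_cast
    ring
  rw [hpow] at hweight
  rw [← ofReal_norm, norm_weightedPullback, hbase, ← ofReal_norm, ← ofReal_norm,
    ← ENNReal.ofReal_mul (norm_nonneg _), ← ENNReal.ofReal_mul (norm_nonneg _), norm_mul, norm_I,
    norm_real, mul_one, mul_comm ‖eval _ q‖, mul_assoc]
  gcongr

lemma norm_eval_mul_abs_im_le_s5 (hγ : γ ∈ Ioo 0 (1 / 2)) (b : ℝ) (q : ℂ[X]) {s : ℂ}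
    (hs : 0 ≤ s.re) :
    ‖q.eval (b + s ^ 2)‖ * |(b + s ^ 2).im| ≤
      2 * s.re * Real.exp (‖s ^ 2‖ ^ γ / Real.cos (γ * π)) * ‖weightedPullback b γ q s‖ := by
  have him : |(b + s ^ 2).im| ≤ 2 * s.re * ‖s‖ := by
    have : (b + s ^ 2).im = 2 * s.re * s.im := by
      simp [sq]
      ring
    rw [this, abs_mul, abs_of_nonneg (by positivity)]
    gcongr
    exact abs_im_le_norm s
  have hweight : 1 ≤ Real.exp (‖s ^ 2‖ ^ γ / Real.cos (γ * π)) * ‖subexpWeight (2 * γ) s‖ := by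
    have hle := exp_neg_le_norm_subexpWeight (β := 2 * γ) (by linarith [hγ.1])
      (by linarith [hγ.2]) s
    rw [show 2 * γ * (π / 2) = γ * π by ring, Real.rpow_mul (norm_nonneg s), Real.rpow_two,
      ← norm_pow, Real.exp_neg] at hle
    exact (inv_le_iff_one_le_mul₀' (Real.exp_pos _)).1 hle
  calc ‖q.eval (b + s ^ 2)‖ * |(b + s ^ 2).im|
      ≤ ‖q.eval (b + s ^ 2)‖ * (2 * s.re * ‖s‖) * 1 := by
        rw [mul_one]
        gcongr
    _ ≤ ‖q.eval (b + s ^ 2)‖ * (2 * s.re * ‖s‖) *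
          (Real.exp (‖s ^ 2‖ ^ γ / Real.cos (γ * π)) * ‖subexpWeight (2 * γ) s‖) := by
        gcongr
    _ = _ := by
        rw [norm_weightedPullback]
        ring

theorem enorm_eval_mul_enorm_im_le (hγ : γ ∈ Ioo 0 (1 / 2)) (b : ℝ) (q : ℂ[X]) (z : ℂ) :
    ‖q.eval z‖ₑ * ‖z.im‖ₑ ≤
      ENNReal.ofReal (2 / π * Real.exp (‖z - b‖ ^ γ / Real.cos (γ * π))) *
        ∫⁻ t in Iic b, ‖q.eval (t : ℂ)‖ₑ * ENNReal.ofReal (Real.exp (-(b - t) ^ γ)) := by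
  rcases eq_or_ne z.im 0 with hz | hz
  · simp [hz]
  obtain ⟨s, hsq, hs⟩ := exists_sq_eq_re_pos (w := z - b) (by simpa using hz)
  obtain rfl : z = b + s ^ 2 := by rw [hsq, add_sub_cancel]
  rw [← hsq]
  set A := Real.exp (‖s ^ 2‖ ^ γ / Real.cos (γ * π))
  calc ‖q.eval (b + s ^ 2)‖ₑ * ‖(b + s ^ 2).im‖ₑ
      = ENNReal.ofReal (‖q.eval (b + s ^ 2)‖ * |(b + s ^ 2).im|) := by
        rw [ENNReal.ofReal_mul (norm_nonneg _), ofReal_norm, ← Real.norm_eq_abs, ofReal_norm]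
    _ ≤ ENNReal.ofReal (2 * s.re * A) * ‖weightedPullback b γ q s‖ₑ := by
        rw [← ofReal_norm, ← ENNReal.ofReal_mul (by positivity)]
        exact ENNReal.ofReal_le_ofReal (norm_eval_mul_abs_im_le_s5 hγ b q hs.le)
    _ ≤ ENNReal.ofReal (2 * s.re * A) * (ENNReal.ofReal (π * s.re)⁻¹ *
          ∫⁻ t in Iic b, ‖q.eval (t : ℂ)‖ₑ * ENNReal.ofReal (Real.exp (-(b - t) ^ γ))) := by
        gcongr
        refine (enorm_le_lintegral_imaginary_axis hs (diffContOnCl_weightedPullback hγ.1 b q)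
          (tendsto_weightedPullback hγ b q)).trans ?_
        exact mul_le_mul_right (lintegral_weightedPullback_le hγ b q) _
    _ = _ := by
        rw [← mul_assoc, ← ENNReal.ofReal_mul (by positivity)]
        congr 2
        field_simp

end PointwiseBound

section DerivativeBound

lemma norm_sq_sub_sq_of_mem_sphere {x r : ℝ} {z : ℂ} (hz : z ∈ sphere (x : ℂ) r) :
    ‖(z - x) ^ 2 - r ^ 2‖ = 2 * r * |z.im| := by
  have hnorm : ‖z - x‖ = r := mem_sphere_iff_norm.1 hz
  have hfactor : (z - x) ^ 2 - r ^ 2 = (z - x) * (↑(2 * z.im) * I) := by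
    have him : (z - x).im = z.im := by simp
    rw [← hnorm, ← mul_conj', ← him, ← sub_conj]
    ring
  rw [hfactor, norm_mul, hnorm, norm_mul, norm_I, norm_real, Real.norm_eq_abs, abs_mul, abs_two]
  ring

lemma norm_deriv_le_of_norm_mul_abs_im_le_s5 {E : Type*} [NormedAddCommGroup E] [NormedSpace ℂ E]
    {f : ℂ → E} {x r B : ℝ} (hr : 0 < r) (hf : DiffContOnCl ℂ f (ball (x : ℂ) r))
    (hB : ∀ z ∈ sphere (x : ℂ) r, ‖f z‖ * |z.im| ≤ B) :
    ‖deriv f x‖ ≤ 2 * B / r ^ 2 := by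
  set p : ℂ → ℂ := fun z ↦ (z - x) ^ 2 - r ^ 2
  have hp : Differentiable ℂ p := by fun_prop
  have hderiv : deriv (fun z ↦ p z • f z) x = -(r : ℂ) ^ 2 • deriv f x := by
    have hp' : HasDerivAt p 0 x := by
      refine ((((hasDerivAt_id (x : ℂ)).sub_const (x : ℂ)).pow 2).sub_const _).congr_deriv ?_
      simp
    have hf' := hf.differentiableAt isOpen_ball (mem_ball_self hr)
    refine (hp'.smul hf'.hasDerivAt).deriv.trans ?_
    simp [p]
  have hcauchy : ‖deriv (fun z ↦ p z • f z) x‖ ≤ 2 * r * B / r := by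
    refine norm_deriv_le_of_forall_mem_sphere_norm_le hr (hp.diffContOnCl.smul hf) fun z hz ↦ ?_
    rw [norm_smul, norm_sq_sub_sq_of_mem_sphere hz, mul_assoc, mul_comm |z.im|]
    gcongr
    exact hB z hz
  rw [hderiv, norm_smul, norm_neg, norm_pow, norm_real, Real.norm_of_nonneg hr.le, mul_right_comm,
    mul_div_cancel_right₀ _ hr.ne'] at hcauchy
  exact (le_div_iff₀' (by positivity)).2 hcauchy

variable {γ : ℝ}

lemma cos_mul_pi_pos (hγ : γ ∈ Ioo 0 (1 / 2)) : 0 < Real.cos (γ * π) := by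
  convert cos_mul_pi_div_two_pos (β := 2 * γ) (by linarith [hγ.1]) (by linarith [hγ.2]) using 2
  ring

theorem enorm_derivative_eval_le (hγ : γ ∈ Ioo 0 (1 / 2)) (b : ℝ) {r : ℝ} (hr : 0 < r) (q : ℂ[X])
    (x : ℝ) :
    ‖q.derivative.eval (x : ℂ)‖ₑ ≤
      ENNReal.ofReal (4 / (π * r ^ 2) * Real.exp ((|x - b| + r) ^ γ / Real.cos (γ * π))) *
        ∫⁻ t in Iic b, ‖q.eval (t : ℂ)‖ₑ * ENNReal.ofReal (Real.exp (-(b - t) ^ γ)) := by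
  set J := ∫⁻ t in Iic b, ‖q.eval (t : ℂ)‖ₑ * ENNReal.ofReal (Real.exp (-(b - t) ^ γ)) with hJ
  set A := Real.exp ((|x - b| + r) ^ γ / Real.cos (γ * π)) with hA
  rcases eq_or_ne J ⊤ with hJtop | hJtop
  · rw [hJtop, ENNReal.mul_top (by positivity)]
    exact le_top
  have hcos := cos_mul_pi_pos hγ
  have hsphere : ∀ z ∈ sphere (x : ℂ) r, ‖q.eval z‖ * |z.im| ≤ 2 / π * A * J.toReal := by
    intro z hz
    have hdist : ‖z - b‖ ≤ |x - b| + r := by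
      rw [← mem_sphere_iff_norm.1 hz, add_comm, ← Real.norm_eq_abs, ← norm_real, ofReal_sub]
      exact norm_sub_le_norm_sub_add_norm_sub _ _ _
    rw [← ENNReal.ofReal_le_ofReal_iff (by positivity), ENNReal.ofReal_mul (norm_nonneg _),
      ofReal_norm, ← Real.norm_eq_abs, ofReal_norm, ENNReal.ofReal_mul (by positivity),
      ENNReal.ofReal_toReal hJtop]
    refine (enorm_eval_mul_enorm_im_le hγ b q z).trans ?_
    rw [← hJ, hA]
    gcongr
    exact hγ.1.le
  have hderiv := norm_deriv_le_of_norm_mul_abs_im_le_s5 hr q.differentiable.diffContOnCl hsphere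
  rw [Polynomial.deriv] at hderiv
  rw [← ofReal_norm, ← ENNReal.ofReal_toReal hJtop, ← ENNReal.ofReal_mul (by positivity)]
  refine ENNReal.ofReal_le_ofReal (hderiv.trans_eq ?_)
  ring

/-- The minimal measure obeying the one-sided LSL lower bound: density `exp (-|t| ^ γ)` on
`(-∞, b]`. A measure is one-sided LSL on that half-line when it dominates a positive multiple of
this one, so that no density needs to be mentioned. -/
noncomputable def oneSidedLSLMeasure (b γ : ℝ) : Measure ℝ :=
  (volume.restrict (Iic b)).withDensity fun t ↦ ENNReal.ofReal (Real.exp (-(|t| ^ γ)))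

lemma lintegral_Iic_mul_exp_neg_rpow_le (hγ0 : 0 ≤ γ) (hγ1 : γ ≤ 1) (b : ℝ)
    {F : ℝ → ℝ≥0∞} (hF : Measurable F) :
    ∫⁻ t in Iic b, F t * ENNReal.ofReal (Real.exp (-(b - t) ^ γ)) ≤
      ENNReal.ofReal (Real.exp (|b| ^ γ)) * ∫⁻ t, F t ∂oneSidedLSLMeasure b γ := by
  rw [oneSidedLSLMeasure, lintegral_withDensity_eq_lintegral_mul _ (by fun_prop) hF,
    ← lintegral_const_mul' _ _ ENNReal.ofReal_ne_top]
  refine setLIntegral_mono' measurableSet_Iic fun t ht ↦ ?_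
  have hbt : 0 ≤ b - t := sub_nonneg.2 ht
  have hpow : |t| ^ γ ≤ |b| ^ γ + (b - t) ^ γ := by
    have habs : |t| ≤ |b| + (b - t) := by
      simpa [abs_of_nonneg hbt] using abs_sub b (b - t)
    exact (Real.rpow_le_rpow (abs_nonneg t) habs hγ0).trans
      (Real.rpow_add_le_add_rpow (abs_nonneg b) hbt hγ0 hγ1)
  rw [Pi.mul_apply, ← mul_assoc, ← ENNReal.ofReal_mul (Real.exp_nonneg _), ← Real.exp_add, mul_comm]
  gcongr
  linarith

lemma smul_oneSidedLSLMeasure_le {b C : ℝ} (hC : 0 ≤ C) {w : ℝ → ℝ}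
    (hw : ∀ᵐ x, x ≤ b → C * Real.exp (-(|x| ^ γ)) ≤ w x) :
    ENNReal.ofReal C • oneSidedLSLMeasure b γ ≤
      volume.withDensity fun x ↦ ENNReal.ofReal (w x) := by
  rw [oneSidedLSLMeasure, ← withDensity_smul _ (by fun_prop)]
  refine (withDensity_mono ?_).trans
    ((restrict_withDensity measurableSet_Iic _).symm.trans_le Measure.restrict_le_self)
  rw [EventuallyLE, ae_restrict_iff' measurableSet_Iic]
  filter_upwards [hw] with x hx hxb
  rw [Pi.smul_apply, smul_eq_mul, ← ENNReal.ofReal_mul hC]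
  exact ENNReal.ofReal_le_ofReal (hx hxb)

lemma enorm_eval_map_ofReal (q : ℝ[X]) (x : ℝ) :
    ‖(q.map ofRealHom).eval (x : ℂ)‖ₑ = ENNReal.ofReal |q.eval x| := by
  rw [← ofRealHom_eq_coe x, eval_map_apply, ofRealHom_eq_coe, ← ofReal_norm, norm_real,
    Real.norm_eq_abs]

theorem one_sided_LSL_derivative_bound_general {μ : Measure ℝ} {b C : ℝ} (hC : 0 < C)
    (hγ : γ ∈ Ioo 0 (1 / 2)) (hμ : ENNReal.ofReal C • oneSidedLSLMeasure b γ ≤ μ) {S : Set ℝ}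
    (hS : IsBounded S) :
    ∃ K > 0, ∀ q : ℂ[X], ∀ x ∈ S,
      ‖q.derivative.eval (x : ℂ)‖ₑ ≤ ENNReal.ofReal K * ∫⁻ y : ℝ, ‖q.eval (y : ℂ)‖ₑ ∂μ := by
  obtain ⟨R, hR⟩ := hS.subset_closedBall b
  have hcos := cos_mul_pi_pos hγ
  set A := 4 / π * Real.exp ((R + 1) ^ γ / Real.cos (γ * π)) with hA
  refine ⟨A * Real.exp (|b| ^ γ) * C⁻¹, by positivity, fun q x hx ↦ ?_⟩
  have hlower : ∫⁻ t, ‖q.eval (t : ℂ)‖ₑ ∂oneSidedLSLMeasure b γ ≤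
      ENNReal.ofReal C⁻¹ * ∫⁻ y : ℝ, ‖q.eval (y : ℂ)‖ₑ ∂μ := by
    rw [ENNReal.ofReal_inv_of_pos hC,
      ← ENNReal.mul_le_iff_le_inv (by positivity) ENNReal.ofReal_ne_top, ← smul_eq_mul,
      ← lintegral_smul_measure]
    exact lintegral_mono' hμ le_rfl
  calc ‖q.derivative.eval (x : ℂ)‖ₑ
      ≤ ENNReal.ofReal A *
          ∫⁻ t in Iic b, ‖q.eval (t : ℂ)‖ₑ * ENNReal.ofReal (Real.exp (-(b - t) ^ γ)) := by
        refine (enorm_derivative_eval_le hγ b one_pos q x).trans ?_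
        rw [one_pow, mul_one, hA]
        have hdist : |x - b| ≤ R := by simpa [Real.dist_eq] using hR hx
        gcongr
        exact hγ.1.le
    _ ≤ ENNReal.ofReal A * (ENNReal.ofReal (Real.exp (|b| ^ γ)) *
          (ENNReal.ofReal C⁻¹ * ∫⁻ y : ℝ, ‖q.eval (y : ℂ)‖ₑ ∂μ)) := by
        gcongr
        refine (lintegral_Iic_mul_exp_neg_rpow_le hγ.1.le (by linarith [hγ.2]) b ?_).trans ?_
        · exact (q.continuous.comp continuous_ofReal).enorm.measurable
        · exact mul_le_mul_right hlower _
    _ = ENNReal.ofReal (A * Real.exp (|b| ^ γ) * C⁻¹) * ∫⁻ y : ℝ, ‖q.eval (y : ℂ)‖ₑ ∂μ := by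
        rw [ENNReal.ofReal_mul (p := A * _) (by positivity),
          ENNReal.ofReal_mul (p := A) (by positivity), mul_assoc, mul_assoc]

end DerivativeBound

end

theorem one_sided_LSL_derivative_bound
    (μ : Measure ℝ) [IsProbabilityMeasure μ] (w : ℝ → ℝ)
    (hμ : μ = volume.withDensity fun x => ENNReal.ofReal (w x))
    (C γ : ℝ) (hC : 0 < C) (hγ : γ ∈ Set.Ioo (0 : ℝ) (1 / 2))
    (hw : ∀ᵐ x ∂volume, x ≤ 1 → C * Real.exp (-(|x| ^ γ)) ≤ w x) :
    ∃ K > 0, ∀ q : Polynomial ℝ, ∀ x ∈ Set.Icc (-(1 / 4) : ℝ) (1 / 4),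
      ENNReal.ofReal |q.derivative.eval x| ≤
        ENNReal.ofReal K * ∫⁻ y, ENNReal.ofReal |q.eval y| ∂μ := by
  obtain ⟨K, hK, hbound⟩ := one_sided_LSL_derivative_bound_general hC hγ
    (hμ ▸ smul_oneSidedLSLMeasure_le hC.le hw) (Metric.isBounded_Icc (-(1 / 4)) (1 / 4))
  refine ⟨K, hK, fun q x hx ↦ ?_⟩
  simpa only [Polynomial.derivative_map, enorm_eval_map_ofReal] using
    hbound (q.map Complex.ofRealHom) x hx
end

section
/- Let p be the real polynomial p(x) = −x(x−1)(x−2)(x−3)(x−4)(x−5). Then: (i) p is squarefree; (ii) the set {x ∈ ℝ : p(x) ≥ 0} is compact; and (iii) there exist a constant C > 0 and an exponent γ ∈ (0, 1/2) such that for every Borel set A ⊆ (−∞, 1], the pushforward measure of the standard Gaussian N(0,1) under the evaluation map x ↦ p(x) satisfies (p_# N(0,1))(A) ≥ C·∫_A exp(−|y|^γ) dy. -/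
open MeasureTheory ProbabilityTheory Polynomial

/-!
If `γ * deg p > 2`, then `|p' x| * exp (-|p x| ^ γ)` decays faster at infinity than the Gaussian
density, so their quotient is continuous and vanishes at infinity, hence is bounded. The change of
variables inequality `∫ y in f '' s, g y ≤ ∫ x in s, |f' x| * g (f x)`, which needs no injectivity,
turns this pointwise comparison into the lower bound for the pushforward on the whole range of `p`.
In degree six the exponent `γ = 5 / 12` lies between `2 / 6` and `1 / 2`.
-/

open Asymptotics Bornology Filter Set Topology
open scoped ENNReal NNReal

section Topology

variable {Y α : Type*} [TopologicalSpace Y] [TopologicalSpace α] [LinearOrder α] {f : Y → α}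

lemma isCompact_setOf_le_of_tendsto_cocompact_atBot [NoMinOrder α] [ClosedIciTopology α]
    (hf : Continuous f) (hlim : Tendsto f (cocompact Y) atBot) (a : α) :
    IsCompact {x | a ≤ f x} := by
  obtain ⟨t, ht, hsub⟩ := mem_cocompact'.1 (hlim.eventually_lt_atBot a)
  exact ht.of_isClosed_subset (isClosed_Ici.preimage hf) fun x hx => hsub (not_lt.2 hx)

lemma Iic_subset_range_of_tendsto_atBot [OrderClosedTopology α] [PreconnectedSpace Y]
    {l : Filter Y} [l.NeBot] (hf : Continuous f) (hlim : Tendsto f l atBot) (x : Y) :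
    Iic (f x) ⊆ range f := fun y hy =>
  mem_range_of_exists_le_of_exists_ge hf (hlim.eventually_le_atBot y).exists ⟨x, hy⟩

end Topology

section AreaInequality

variable {E : Type*} [NormedAddCommGroup E] [NormedSpace ℝ E] [FiniteDimensional ℝ E]
  [MeasurableSpace E] [BorelSpace E] (μ : Measure E) [μ.IsAddHaarMeasure]
  {s : Set E} {f : E → E} {f' : E → E →L[ℝ] E}

lemma restrict_image_le_map_withDensity_abs_det_fderiv (hs : MeasurableSet s) (hf : Measurable f)
    (hf' : ∀ x ∈ s, HasFDerivWithinAt f (f' x) s x) :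
    μ.restrict (f '' s) ≤
      ((μ.restrict s).withDensity fun x => ENNReal.ofReal |(f' x).det|).map f := by
  refine Measure.le_iff.2 fun t ht => ?_
  have hpre : MeasurableSet (f ⁻¹' t) := hf ht
  rw [Measure.map_apply hf ht, withDensity_apply _ hpre, Measure.restrict_restrict hpre,
    Measure.restrict_apply ht, inter_comm t, ← image_inter_preimage, inter_comm s]
  exact addHaar_image_le_lintegral_abs_det_fderiv μ (hpre.inter hs)
    fun x hx => (hf' x hx.2).mono inter_subset_right

lemma lintegral_image_le_lintegral_abs_det_fderiv_mul (hs : MeasurableSet s) (hf : Measurable f)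
    (hf' : ∀ x ∈ s, HasFDerivWithinAt f (f' x) s x) (g : E → ℝ≥0∞) :
    ∫⁻ y in f '' s, g y ∂μ ≤ ∫⁻ x in s, ENNReal.ofReal |(f' x).det| * g (f x) ∂μ :=
  calc ∫⁻ y in f '' s, g y ∂μ
      ≤ ∫⁻ y, g y ∂((μ.restrict s).withDensity fun x => ENNReal.ofReal |(f' x).det|).map f :=
        lintegral_mono' (restrict_image_le_map_withDensity_abs_det_fderiv μ hs hf hf') le_rfl
    _ ≤ ∫⁻ x, g (f x) ∂(μ.restrict s).withDensity fun x => ENNReal.ofReal |(f' x).det| :=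
        lintegral_map_le _ _
    _ = ∫⁻ x in s, ENNReal.ofReal |(f' x).det| * g (f x) ∂μ :=
        lintegral_withDensity_eq_lintegral_mul_non_measurable₀ _
          (aemeasurable_ofReal_abs_det_fderivWithin μ hs hf')
          (ae_of_all _ fun _ => ENNReal.ofReal_lt_top) _

lemma setLIntegral_le_map_withDensity_of_abs_deriv_mul_le {f f' : ℝ → ℝ} {g ρ : ℝ → ℝ≥0∞}
    (hf : ∀ x, HasDerivAt f (f' x) x) (hgρ : ∀ x, ENNReal.ofReal |f' x| * g (f x) ≤ ρ x)
    {A : Set ℝ} (hA : MeasurableSet A) (hAf : A ⊆ range f) :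
    ∫⁻ y in A, g y ≤ (volume.withDensity ρ).map f A := by
  have hfm : Measurable f :=
    (continuous_iff_continuousAt.2 fun x => (hf x).continuousAt).measurable
  calc ∫⁻ y in A, g y
      = ∫⁻ y in f '' (f ⁻¹' A), g y := by rw [image_preimage_eq_of_subset hAf]
    _ ≤ ∫⁻ x in f ⁻¹' A, ENNReal.ofReal |f' x| * g (f x) := by
        simpa only [ContinuousLinearMap.det_toSpanSingleton] using
          lintegral_image_le_lintegral_abs_det_fderiv_mul volume (hfm hA) hfm
            (fun x _ => (hf x).hasFDerivAt.hasFDerivWithinAt) g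
    _ ≤ ∫⁻ x in f ⁻¹' A, ρ x := lintegral_mono hgρ
    _ = (volume.withDensity ρ).map f A := by
        rw [Measure.map_apply hfm hA, withDensity_apply _ (hfm hA)]

end AreaInequality

section PolynomialGrowth

lemma isLittleO_rpow_rpow_atTop_of_lt {a b : ℝ} (hab : a < b) :
    (fun x : ℝ => x ^ a) =o[atTop] fun x => x ^ b := by
  have hlim : Tendsto (fun x : ℝ => x ^ (-(b - a))) atTop (𝓝 0) :=
    tendsto_rpow_neg_atTop (sub_pos.2 hab)
  have hne : ∀ᶠ x : ℝ in atTop, x ^ b ≠ 0 :=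
    (eventually_gt_atTop 0).mono fun x hx => (Real.rpow_pos_of_pos hx b).ne'
  refine (isLittleO_iff_tendsto' (hne.mono fun x hx h => absurd h hx)).2 (hlim.congr' ?_)
  filter_upwards [eventually_gt_atTop 0] with x hx
  rw [neg_sub, Real.rpow_sub hx]

lemma isLittleO_eval_norm_eval_rpow {R : Type*} [NormedRing R] [NormMulClass R] {p q : R[X]}
    {γ : ℝ} (h : q.natDegree < γ * p.natDegree) :
    q.eval =o[cobounded R] fun x => ‖p.eval x‖ ^ γ := by
  have hγ : 0 ≤ γ :=
    (pos_of_mul_pos_left ((Nat.cast_nonneg _).trans_lt h) (Nat.cast_nonneg _)).le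
  have hp : p.leadingCoeff ≠ 0 := by
    intro hp
    rw [leadingCoeff_eq_zero] at hp
    simp only [hp, natDegree_zero, Nat.cast_zero, mul_zero] at h
    exact h.not_ge (Nat.cast_nonneg _)
  have : Nontrivial R := nontrivial_of_ne _ _ hp
  have : NormOneClass R := NormMulClass.toNormOneClass
  have hq : q.eval =O[cobounded R] fun x => ‖x‖ ^ q.natDegree :=
    (isEquivalent_cobounded_leading_monomial.isBigO.trans
      (isBigO_const_mul_self _ _ _)).norm_right.congr_right fun x => norm_pow x _
  have hpow : (fun x : R => ‖x‖ ^ p.natDegree) =O[cobounded R] fun x => ‖p.eval x‖ :=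
    (((isBigO_self_const_mul hp _ _).trans
      isEquivalent_cobounded_leading_monomial.isBigO_symm).norm_norm).congr_left
        fun x => norm_pow x _
  calc q.eval
      =O[cobounded R] fun x => ‖x‖ ^ (q.natDegree : ℝ) := by simpa only [Real.rpow_natCast] using hq
    _ =o[cobounded R] fun x => ‖x‖ ^ (γ * p.natDegree) :=
        (isLittleO_rpow_rpow_atTop_of_lt h).comp_tendsto tendsto_norm_cobounded_atTop
    _ =O[cobounded R] fun x => ‖p.eval x‖ ^ γ := by
        simpa only [mul_comm γ, Real.rpow_natCast_mul (norm_nonneg _)] using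
          hpow.rpow hγ (Eventually.of_forall fun x => norm_nonneg _)

lemma tendsto_eval_cobounded_atBot {p : ℝ[X]} (hdeg : p.natDegree ≠ 0) (heven : Even p.natDegree)
    (hlead : p.leadingCoeff < 0) : Tendsto p.eval (cobounded ℝ) atBot := by
  have hpow : Tendsto (fun x : ℝ => x ^ p.natDegree) (cobounded ℝ) atTop := by
    simpa only [Function.comp_def, Real.norm_eq_abs, heven.pow_abs] using
      (tendsto_pow_atTop hdeg).comp (tendsto_norm_cobounded_atTop (E := ℝ))
  exact isEquivalent_cobounded_leading_monomial.symm.tendsto_atBot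
    (hpow.const_mul_atTop_of_neg hlead)

variable {p : ℝ[X]} {γ : ℝ}

lemma tendsto_eval_mul_exp_eval_sub_abs_eval_rpow (q : ℝ[X]) {r : ℝ[X]}
    (h : r.natDegree < γ * p.natDegree) :
    Tendsto (fun x => q.eval x * Real.exp (r.eval x - |p.eval x| ^ γ)) (cobounded ℝ) (𝓝 0) := by
  -- With `u = |p| ^ γ`, the product is `O(u ^ n * exp (-u / 2))` for some `n`, and `u → ∞`.
  have hpos : 0 < γ * p.natDegree := (Nat.cast_nonneg _).trans_lt h
  have hinfty : Tendsto (fun x => |p.eval x| ^ γ) (cobounded ℝ) atTop := by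
    have hone : (fun _ => (1 : ℝ)) =o[cobounded ℝ] fun x => |p.eval x| ^ γ :=
      (isLittleO_eval_norm_eval_rpow (q := 1) (by simpa using hpos)).congr_left fun _ => eval_one
    exact ((isLittleO_one_left_iff ℝ).1 hone).congr fun x => Real.norm_of_nonneg (by positivity)
  obtain ⟨n, hn⟩ : ∃ n : ℕ, q.natDegree < n * (γ * p.natDegree) :=
    (exists_lt_nsmul hpos _).imp fun n hn => by rwa [nsmul_eq_mul] at hn
  have hq : q.eval =O[cobounded ℝ] fun x => (|p.eval x| ^ γ) ^ n := by
    have hqn : q.natDegree < γ * n * p.natDegree := by linarith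
    simpa only [Real.norm_eq_abs, Real.rpow_mul_natCast (abs_nonneg _)] using
      (isLittleO_eval_norm_eval_rpow hqn).isBigO
  have hr : (fun x => Real.exp (r.eval x - |p.eval x| ^ γ)) =O[cobounded ℝ]
      fun x => Real.exp (-(1 / 2 * |p.eval x| ^ γ)) := by
    refine IsBigO.of_norm_eventuallyLE ?_
    filter_upwards [(isLittleO_eval_norm_eval_rpow h).bound one_half_pos] with x hx
    rw [Real.norm_of_nonneg (by positivity : 0 ≤ ‖p.eval x‖ ^ γ), Real.norm_eq_abs,
      Real.norm_eq_abs] at hx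
    rw [Real.norm_of_nonneg (Real.exp_pos _).le, Real.exp_le_exp]
    linarith [le_abs_self (r.eval x)]
  refine (hq.mul hr).trans_tendsto ?_
  have hexp := ((isLittleO_pow_exp_pos_mul_atTop n one_half_pos).comp_tendsto
    hinfty).tendsto_div_nhds_zero
  simpa only [Function.comp_def, Real.exp_neg, div_eq_mul_inv] using hexp

lemma exists_pos_abs_eval_mul_exp_neg_abs_eval_rpow_le (q : ℝ[X]) {r : ℝ[X]}
    (h : r.natDegree < γ * p.natDegree) :
    ∃ K > 0, ∀ x, |q.eval x| * Real.exp (-|p.eval x| ^ γ) ≤ K * Real.exp (-r.eval x) := by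
  have hγ : 0 ≤ γ :=
    (pos_of_mul_pos_left ((Nat.cast_nonneg _).trans_lt h) (Nat.cast_nonneg _)).le
  set F : ℝ → ℝ := fun x => q.eval x * Real.exp (r.eval x - |p.eval x| ^ γ)
  have hF : Continuous F := q.continuous.mul
    ((r.continuous.sub (p.continuous.abs.rpow_const fun _ => Or.inr hγ)).rexp)
  have hbdd : IsBounded (range F) := by
    rw [hF.isBounded_range_iff_isBigO, ← Metric.cobounded_eq_cocompact]
    exact (tendsto_eval_mul_exp_eval_sub_abs_eval_rpow q h).isBigO_one ℝ
  obtain ⟨K, hK, hle⟩ := hbdd.exists_pos_norm_le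
  refine ⟨K, hK, fun x => ?_⟩
  calc |q.eval x| * Real.exp (-|p.eval x| ^ γ)
      = |F x| * Real.exp (-r.eval x) := by
        rw [abs_mul, Real.abs_exp, mul_assoc, ← Real.exp_add]
        ring_nf
    _ ≤ K * Real.exp (-r.eval x) := by
        gcongr
        exact hle _ (mem_range_self x)

end PolynomialGrowth

section GaussianPushforward

lemma exists_pos_mul_abs_eval_mul_exp_neg_le_gaussianPDFReal {p : ℝ[X]} {γ : ℝ}
    (h : 2 < γ * p.natDegree) (q : ℝ[X]) (m : ℝ) {v : ℝ≥0} (hv : v ≠ 0) :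
    ∃ c > 0, ∀ x, c * (|q.eval x| * Real.exp (-|p.eval x| ^ γ)) ≤ gaussianPDFReal m v x := by
  set r : ℝ[X] := C (2 * v : ℝ)⁻¹ * (X - C m) ^ 2
  have hr : (r.natDegree : ℝ) < γ * p.natDegree := by
    refine lt_of_le_of_lt ?_ h
    have hdeg : r.natDegree ≤ 2 := by
      simp only [r]
      compute_degree
    exact_mod_cast hdeg
  obtain ⟨K, hK, hle⟩ := exists_pos_abs_eval_mul_exp_neg_abs_eval_rpow_le q hr
  have hr_eval (x : ℝ) : -r.eval x = -(x - m) ^ 2 / (2 * v) := by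
    simp only [r, eval_mul, eval_C, eval_pow, eval_sub, eval_X]
    ring
  refine ⟨(√(2 * Real.pi * v))⁻¹ * K⁻¹, by positivity, fun x => ?_⟩
  rw [gaussianPDFReal, ← hr_eval, mul_assoc]
  gcongr
  exact (inv_mul_le_iff₀ hK).2 (hle x)

theorem exists_pos_mul_setLIntegral_exp_neg_le_map_eval_gaussianReal {p : ℝ[X]} {γ : ℝ}
    (h : 2 < γ * p.natDegree) (m : ℝ) {v : ℝ≥0} (hv : v ≠ 0) :
    ∃ c > 0, ∀ A : Set ℝ, MeasurableSet A → A ⊆ range p.eval →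
      ENNReal.ofReal c * ∫⁻ y in A, ENNReal.ofReal (Real.exp (-|y| ^ γ)) ≤
        (gaussianReal m v).map p.eval A := by
  obtain ⟨c, hc, hle⟩ :=
    exists_pos_mul_abs_eval_mul_exp_neg_le_gaussianPDFReal h p.derivative m hv
  refine ⟨c, hc, fun A hA hAp => ?_⟩
  rw [gaussianReal_of_var_ne_zero m hv, ← lintegral_const_mul' _ _ ENNReal.ofReal_ne_top]
  refine setLIntegral_le_map_withDensity_of_abs_deriv_mul_le p.hasDerivAt (fun x => ?_) hA hAp
  rw [← ENNReal.ofReal_mul hc.le, ← ENNReal.ofReal_mul (abs_nonneg _), mul_left_comm]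
  exact ENNReal.ofReal_le_ofReal (hle x)

end GaussianPushforward

section FallingFactorial

lemma descPochhammer_eq_prod_X_sub_C (R : Type*) [CommRing R] (n : ℕ) :
    descPochhammer R n = ∏ i ∈ Finset.range n, (X - C (i : R)) := by
  induction n with
  | zero => simp
  | succ n ih => rw [descPochhammer_succ_right, ih, Finset.prod_range_succ, map_natCast]

lemma separable_descPochhammer (K : Type*) [Field K] [CharZero K] (n : ℕ) :
    (descPochhammer K n).Separable := by
  rw [descPochhammer_eq_prod_X_sub_C, separable_prod_X_sub_C_iff']
  exact fun i _ j _ hij => Nat.cast_injective hij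

lemma tendsto_neg_descPochhammer_eval_cobounded_atBot {n : ℕ} (hn : n ≠ 0) (heven : Even n) :
    Tendsto (-descPochhammer ℝ n).eval (cobounded ℝ) atBot := by
  have hdeg : (-descPochhammer ℝ n).natDegree = n := by
    rw [natDegree_neg, descPochhammer_natDegree]
  refine tendsto_eval_cobounded_atBot (by rwa [hdeg]) (by rwa [hdeg]) ?_
  rw [leadingCoeff_neg, (monic_descPochhammer ℝ n).leadingCoeff]
  exact neg_one_lt_zero

lemma neg_mul_X_sub_C_eq_neg_descPochhammer_six :
    -(X * (X - C 1) * (X - C 2) * (X - C 3) * (X - C 4) * (X - C 5)) = -descPochhammer ℝ 6 := by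
  rw [descPochhammer_eq_prod_X_sub_C]
  simp [Finset.prod_range_succ, map_ofNat C]

lemma Iic_one_subset_range_neg_descPochhammer_six_eval :
    Iic 1 ⊆ range (-descPochhammer ℝ 6).eval := by
  have hone : 1 ≤ (-descPochhammer ℝ 6).eval (1 / 10) := by
    rw [eval_neg, descPochhammer_eval_eq_prod_range]
    norm_num [Finset.prod_range_succ]
  exact (Iic_subset_Iic.2 hone).trans <| Iic_subset_range_of_tendsto_atBot
    (Polynomial.continuous _)
    (tendsto_neg_descPochhammer_eval_cobounded_atBot (by norm_num) (by decide)) _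

end FallingFactorial

theorem degree_six_polynomial_one_sided_LSL :
    Squarefree (-(X * (X - C 1) * (X - C 2) * (X - C 3) * (X - C 4) * (X - C 5)) :
        Polynomial ℝ) ∧
    IsCompact {x : ℝ |
      0 ≤ (-(X * (X - C 1) * (X - C 2) * (X - C 3) * (X - C 4) * (X - C 5)) :
        Polynomial ℝ).eval x} ∧
    ∃ c > (0 : ℝ), ∃ γ ∈ Set.Ioo (0 : ℝ) (1 / 2), ∀ A : Set ℝ,
      MeasurableSet A → A ⊆ Set.Iic 1 →
        ENNReal.ofReal c * ∫⁻ y in A, ENNReal.ofReal (Real.exp (-(|y| ^ γ))) ≤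
          Measure.map
            (fun x => (-(X * (X - C 1) * (X - C 2) * (X - C 3) * (X - C 4) * (X - C 5)) :
              Polynomial ℝ).eval x)
            (gaussianReal 0 1) A := by
  rw [neg_mul_X_sub_C_eq_neg_descPochhammer_six]
  refine ⟨(separable_descPochhammer ℝ 6).squarefree.squarefree_of_dvd (neg_dvd.2 dvd_rfl), ?_, ?_⟩
  · refine isCompact_setOf_le_of_tendsto_cocompact_atBot (Polynomial.continuous _) ?_ 0
    rw [← Metric.cobounded_eq_cocompact]
    exact tendsto_neg_descPochhammer_eval_cobounded_atBot (by norm_num) (by decide)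
  · have hdeg : 2 < (5 / 12 : ℝ) * (-descPochhammer ℝ 6).natDegree := by
      rw [natDegree_neg, descPochhammer_natDegree]
      norm_num
    obtain ⟨c, hc, hle⟩ :=
      exists_pos_mul_setLIntegral_exp_neg_le_map_eval_gaussianReal hdeg 0 one_ne_zero
    exact ⟨c, hc, 5 / 12, by norm_num, fun A hA hA1 =>
      hle A hA (hA1.trans Iic_one_subset_range_neg_descPochhammer_six_eval)⟩
end

section
/- Let μ be a probability measure on ℝ^n that approximately matches the moments of the standard Gaussian up to degree k with slack η. Let P be a polynomial in n real variables of total degree at most d whose sum of absolute values of coefficients is at most n^{d/2}, and let ℓ be a positive integer with d·ℓ ≤ k. Then ∫ P(x)^ℓ dμ(x) ≤ ∫ P(y)^ℓ dγₙ(y) + η·n^{dℓ/2}. -/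
open MeasureTheory ProbabilityTheory

/-- The standard Gaussian measure on `ι → ℝ` (product of `N(0,1)`). -/
noncomputable def stdGaussianPi (ι : Type) [Fintype ι] : Measure (ι → ℝ) :=
  Measure.pi fun _ => gaussianReal 0 1

/-- `μ` approximately matches the moments of the standard Gaussian up to degree `k`
with slack `η`. -/
def MomentMatches {ι : Type} [Fintype ι] (k : ℕ) (η : ℝ)
    (μ : Measure (ι → ℝ)) : Prop :=
  ∀ α : ι → ℕ, (∑ i, α i) ≤ k →
    Integrable (fun x => ∏ i, |x i| ^ α i) μ ∧
    |(∫ x, ∏ i, (x i) ^ α i ∂μ) - ∫ y, ∏ i, (y i) ^ α i ∂(stdGaussianPi ι)| ≤ η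

/-!
The coefficient `ℓ¹` norm is submultiplicative, so `P ^ ℓ` is a polynomial of degree at most `d * ℓ`
with coefficient norm at most that of `P` to the power `ℓ`. Integrating it monomial by monomial
against `μ` and the Gaussian, each monomial costs at most `η` times the absolute value of its
coefficient.
-/

section L1CoeffNorm

open MvPolynomial

/-- The `ℓ¹` norm of the coefficient family of a multivariate polynomial; it controls the error of
integrating the polynomial when every monomial is integrated with a uniform error. -/
def l1CoeffNorm {σ R : Type*} [SeminormedCommRing R] (P : MvPolynomial σ R) : ℝ :=
  ∑ m ∈ P.support, ‖P.coeff m‖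

variable {σ R : Type*} [SeminormedCommRing R]

lemma l1CoeffNorm_nonneg (P : MvPolynomial σ R) : 0 ≤ l1CoeffNorm P :=
  Finset.sum_nonneg fun _ _ => norm_nonneg _

lemma l1CoeffNorm_eq_sum_of_support_subset {P : MvPolynomial σ R} {s : Finset (σ →₀ ℕ)}
    (hs : P.support ⊆ s) : l1CoeffNorm P = ∑ m ∈ s, ‖P.coeff m‖ :=
  Finset.sum_subset hs fun m _ hm => by rw [notMem_support_iff.1 hm, norm_zero]

lemma l1CoeffNorm_monomial (m : σ →₀ ℕ) (a : R) : l1CoeffNorm (monomial m a) = ‖a‖ := by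
  classical
  rw [l1CoeffNorm_eq_sum_of_support_subset support_monomial_subset, Finset.sum_singleton,
    coeff_monomial, if_pos rfl]

lemma l1CoeffNorm_add_le (P Q : MvPolynomial σ R) :
    l1CoeffNorm (P + Q) ≤ l1CoeffNorm P + l1CoeffNorm Q := by
  classical
  rw [l1CoeffNorm_eq_sum_of_support_subset support_add,
    l1CoeffNorm_eq_sum_of_support_subset (P := P) Finset.subset_union_left,
    l1CoeffNorm_eq_sum_of_support_subset (P := Q) Finset.subset_union_right,
    ← Finset.sum_add_distrib]
  exact Finset.sum_le_sum fun m _ => (congrArg norm (coeff_add m P Q)).trans_le (norm_add_le _ _)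

lemma l1CoeffNorm_sum_le {κ : Type*} (s : Finset κ) (f : κ → MvPolynomial σ R) :
    l1CoeffNorm (∑ i ∈ s, f i) ≤ ∑ i ∈ s, l1CoeffNorm (f i) :=
  Finset.le_sum_of_subadditive l1CoeffNorm (by simp [l1CoeffNorm]) l1CoeffNorm_add_le s f

lemma l1CoeffNorm_mul_le (P Q : MvPolynomial σ R) :
    l1CoeffNorm (P * Q) ≤ l1CoeffNorm P * l1CoeffNorm Q :=
  calc l1CoeffNorm (P * Q)
      = l1CoeffNorm (∑ a ∈ P.support, ∑ b ∈ Q.support,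
          monomial (a + b) (P.coeff a * Q.coeff b)) := congrArg l1CoeffNorm mul_def
    _ ≤ ∑ a ∈ P.support, ∑ b ∈ Q.support,
          l1CoeffNorm (monomial (a + b) (P.coeff a * Q.coeff b)) :=
        (l1CoeffNorm_sum_le _ _).trans (Finset.sum_le_sum fun _ _ => l1CoeffNorm_sum_le _ _)
    _ ≤ ∑ a ∈ P.support, ∑ b ∈ Q.support, ‖P.coeff a‖ * ‖Q.coeff b‖ := by
        gcongr
        exact (l1CoeffNorm_monomial _ _).trans_le (norm_mul_le _ _)
    _ = l1CoeffNorm P * l1CoeffNorm Q := (Finset.sum_mul_sum _ _ _ _).symm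

lemma l1CoeffNorm_pow_le [NormOneClass R] (P : MvPolynomial σ R) (ℓ : ℕ) :
    l1CoeffNorm (P ^ ℓ) ≤ l1CoeffNorm P ^ ℓ := by
  induction ℓ with
  | zero =>
    rw [pow_zero, pow_zero, ← C_1, C_apply, l1CoeffNorm_monomial, norm_one]
  | succ ℓ ih =>
    rw [pow_succ, pow_succ]
    exact (l1CoeffNorm_mul_le _ _).trans (mul_le_mul_of_nonneg_right ih (l1CoeffNorm_nonneg P))

end L1CoeffNorm

section Integration

variable {ι : Type*} [Fintype ι]

lemma integral_mvPolynomial_eval {μ : Measure (ι → ℝ)} {Q : MvPolynomial ι ℝ}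
    (hμ : ∀ m ∈ Q.support, Integrable (fun x => ∏ i, x i ^ m i) μ) :
    ∫ x, MvPolynomial.eval x Q ∂μ = ∑ m ∈ Q.support, Q.coeff m * ∫ x, ∏ i, x i ^ m i ∂μ := by
  simp_rw [MvPolynomial.eval_eq', ← integral_const_mul]
  exact integral_finsetSum _ fun m hm => (hμ m hm).const_mul _

lemma abs_integral_eval_sub_integral_eval_le {μ ν : Measure (ι → ℝ)} {Q : MvPolynomial ι ℝ} {η : ℝ}
    (hμ : ∀ m ∈ Q.support, Integrable (fun x => ∏ i, x i ^ m i) μ)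
    (hν : ∀ m ∈ Q.support, Integrable (fun x => ∏ i, x i ^ m i) ν)
    (hη : ∀ m ∈ Q.support, |∫ x, ∏ i, x i ^ m i ∂μ - ∫ x, ∏ i, x i ^ m i ∂ν| ≤ η) :
    |∫ x, MvPolynomial.eval x Q ∂μ - ∫ x, MvPolynomial.eval x Q ∂ν| ≤ η * l1CoeffNorm Q := by
  rw [integral_mvPolynomial_eval hμ, integral_mvPolynomial_eval hν, ← Finset.sum_sub_distrib,
    mul_comm, l1CoeffNorm, Finset.sum_mul]
  refine (Finset.abs_sum_le_sum_abs _ _).trans (Finset.sum_le_sum fun m hm => ?_)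
  rw [← mul_sub, abs_mul]
  exact mul_le_mul_of_nonneg_left (hη m hm) (abs_nonneg _)

end Integration

lemma integrable_pow_gaussianReal (m : ℝ) (v : NNReal) (p : ℕ) :
    Integrable (fun t => t ^ p) (gaussianReal m v) := by
  refine (integrable_norm_iff (by fun_prop)).1 ?_
  simpa only [norm_pow, id_eq] using
    (memLp_id_gaussianReal (μ := m) (v := v) (p : NNReal)).integrable_norm_pow'

lemma integrable_prod_pow_stdGaussianPi {ι : Type} [Fintype ι] (α : ι → ℕ) :
    Integrable (fun y => ∏ i, y i ^ α i) (stdGaussianPi ι) :=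
  Integrable.fintype_prod fun i => integrable_pow_gaussianReal 0 1 (α i)

namespace MomentMatches

variable {ι : Type} [Fintype ι] {k : ℕ} {η : ℝ} {μ : Measure (ι → ℝ)}

lemma slack_nonneg (hμ : MomentMatches k η μ) : 0 ≤ η :=
  (abs_nonneg _).trans (hμ 0 (by simp)).2

lemma integrable_prod_pow (hμ : MomentMatches k η μ) {α : ι → ℕ} (hα : ∑ i, α i ≤ k) :
    Integrable (fun x => ∏ i, x i ^ α i) μ := by
  have hcont : Continuous fun x : ι → ℝ => ∏ i, x i ^ α i := by fun_prop
  refine (integrable_norm_iff hcont.aestronglyMeasurable).1 ?_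
  simpa only [norm_prod, norm_pow, Real.norm_eq_abs] using (hμ α hα).1

lemma abs_integral_eval_sub_le (hμ : MomentMatches k η μ) {Q : MvPolynomial ι ℝ}
    (hQ : Q.totalDegree ≤ k) :
    |∫ x, MvPolynomial.eval x Q ∂μ - ∫ y, MvPolynomial.eval y Q ∂(stdGaussianPi ι)| ≤
      η * l1CoeffNorm Q := by
  have degree_le : ∀ m ∈ Q.support, ∑ i, m i ≤ k := fun m hm => by
    rw [← Finsupp.degree_eq_sum]
    exact (MvPolynomial.le_totalDegree hm).trans hQ
  exact abs_integral_eval_sub_integral_eval_le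
    (fun m hm => hμ.integrable_prod_pow (degree_le m hm))
    (fun m _ => integrable_prod_pow_stdGaussianPi m) (fun m hm => (hμ m (degree_le m hm)).2)

end MomentMatches

theorem moment_bound_of_momentMatches_general {ι : Type} [Fintype ι] {k d ℓ : ℕ}
    (hdl : d * ℓ ≤ k) {η : ℝ} {μ : Measure (ι → ℝ)} (hμ : MomentMatches k η μ)
    {P : MvPolynomial ι ℝ} (hdeg : P.totalDegree ≤ d)
    {B : ℝ} (hcoeff : ∑ m ∈ P.support, |P.coeff m| ≤ B) :
    |∫ x, (MvPolynomial.eval x P) ^ ℓ ∂μ -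
      ∫ y, (MvPolynomial.eval y P) ^ ℓ ∂(stdGaussianPi ι)| ≤ η * B ^ ℓ := by
  have totalDegree_pow_le : (P ^ ℓ).totalDegree ≤ k :=
    calc (P ^ ℓ).totalDegree ≤ ℓ * P.totalDegree := P.totalDegree_pow ℓ
      _ ≤ ℓ * d := Nat.mul_le_mul_left ℓ hdeg
      _ ≤ k := (mul_comm ℓ d).trans_le hdl
  have l1CoeffNorm_pow_le_pow : l1CoeffNorm (P ^ ℓ) ≤ B ^ ℓ :=
    (l1CoeffNorm_pow_le P ℓ).trans (pow_le_pow_left₀ (l1CoeffNorm_nonneg P) hcoeff ℓ)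
  simp_rw [← map_pow]
  exact (hμ.abs_integral_eval_sub_le totalDegree_pow_le).trans
    (mul_le_mul_of_nonneg_left l1CoeffNorm_pow_le_pow hμ.slack_nonneg)

theorem moment_bound_of_momentMatches (n k d ℓ : ℕ) (hℓ : 1 ≤ ℓ) (hdl : d * ℓ ≤ k)
    (η : ℝ) (μ : Measure (Fin n → ℝ)) [IsProbabilityMeasure μ]
    (hμ : MomentMatches k η μ)
    (P : MvPolynomial (Fin n) ℝ) (hdeg : P.totalDegree ≤ d)
    (hcoeff : ∑ m ∈ P.support, |P.coeff m| ≤ (n : ℝ) ^ ((d : ℝ) / 2)) :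
    (∫ x, (MvPolynomial.eval x P) ^ ℓ ∂μ) ≤
      (∫ y, (MvPolynomial.eval y P) ^ ℓ ∂(stdGaussianPi (Fin n))) +
        η * (n : ℝ) ^ (((d * ℓ : ℕ) : ℝ) / 2) := by
  rw [Nat.cast_mul, mul_div_right_comm, Real.rpow_mul_natCast n.cast_nonneg, ← sub_le_iff_le_add']
  exact (le_abs_self _).trans (moment_bound_of_momentMatches_general hdl hμ hdeg hcoeff)
end

section
/- There exists an absolute constant c > 0 with the following property. For all integers n, k ≥ 1, every η ∈ (0,1), and every integer m ≥ c·(2kn)^k·η^{-2}: if x^{(1)}, …, x^{(m)} are drawn independently from the standard Gaussian measure γₙ on ℝ^n (i.e., from the m-fold product measure γₙ^{⊗m}), then with probability at least 0.99 the following holds simultaneously for every multi-index α ∈ ℕ^n with |α| ≤ k: |(1/m)·Σ_{i=1}^m (x^{(i)})^α − ∫ y^α dγₙ(y)| ≤ η. -/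
open MeasureTheory ProbabilityTheory

/-!
By Chebyshev's inequality and a union bound, the failure probability is at most
`∑_{|α| ≤ k} Var(x^α) / (m η²)`. By independence of the coordinates
`Var(x^α) ≤ E[x^{2α}] = ∏ⱼ (2αⱼ - 1)‼`, and `(2a - 1)‼ ≤ a ^ a` makes this at most `k ^ k`.
There are at most `(n + 1) ^ k ≤ (2n) ^ k` multi-indices of degree at most `k`, so the sum of the
variances is at most `(2kn) ^ k` and `c = 100` works.
-/

open Finset
open scoped Nat NNReal

theorem doubleFactorial_two_mul_sub_one_le_pow_self (a : ℕ) : (2 * a - 1)‼ ≤ a ^ a := by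
  have factorial_split : (2 * a)! = 2 ^ a * a ! * (2 * a - 1)‼ := by
    cases a with
    | zero => rfl
    | succ b =>
      rw [← Nat.doubleFactorial_two_mul]
      exact Nat.factorial_eq_mul_doubleFactorial (2 * b + 1)
  refine Nat.le_of_mul_le_mul_left (c := 2 ^ a * a !) ?_ (by positivity)
  calc 2 ^ a * a ! * (2 * a - 1)‼ = (2 * a)! := factorial_split.symm
    _ ≤ (2 * a) ^ a * a ! := Nat.factorial_two_mul_le a
    _ = 2 ^ a * a ! * a ^ a := by ring

theorem pow_self_mono : Monotone fun n : ℕ => n ^ n := by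
  intro a b hab
  rcases b.eq_zero_or_pos with rfl | hb
  · simp_all
  · exact (Nat.pow_le_pow_left hab a).trans (Nat.pow_le_pow_right hb hab)

theorem prod_pow_self_le_sum_pow_sum {ι : Type*} (s : Finset ι) (α : ι → ℕ) :
    ∏ j ∈ s, α j ^ α j ≤ (∑ j ∈ s, α j) ^ ∑ j ∈ s, α j := by
  rw [← prod_pow_eq_pow_sum]
  gcongr with j hj
  exact single_le_sum (fun _ _ => Nat.zero_le _) hj

theorem card_piAntidiag_le_pow {ι : Type*} [DecidableEq ι] (s : Finset ι) (k : ℕ) :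
    #(piAntidiag s k) ≤ #s ^ k := by
  have multinomial_theorem := sum_pow_eq_sum_piAntidiag s (fun _ => 1) k
  simp only [sum_const, smul_eq_mul, mul_one, one_pow, prod_const_one] at multinomial_theorem
  rw [multinomial_theorem, card_eq_sum_ones]
  exact sum_le_sum fun α _ => Nat.multinomial_pos s α

open Classical in
/-- The multi-indices `α : ι → ℕ` with `|α| ≤ k`, obtained from those of degree exactly `k` on
`Option ι` by forgetting the exponent of the slack variable `none`. -/
noncomputable def multiIndices (ι : Type*) [Fintype ι] (k : ℕ) : Finset (ι → ℕ) :=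
  (piAntidiag (univ : Finset (Option ι)) k).image fun β j => β (some j)

theorem mem_multiIndices {ι : Type*} [Fintype ι] {k : ℕ} {α : ι → ℕ} :
    α ∈ multiIndices ι k ↔ ∑ j, α j ≤ k := by
  classical
  simp only [multiIndices, mem_image, mem_piAntidiag, Fintype.sum_option]
  constructor
  · rintro ⟨β, ⟨degree_eq, -⟩, rfl⟩
    lia
  · intro degree_le
    exact ⟨fun o => o.elim (k - ∑ j, α j) α, by simpa using Nat.sub_add_cancel degree_le, rfl⟩

theorem card_multiIndices_le (ι : Type*) [Fintype ι] (k : ℕ) :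
    #(multiIndices ι k) ≤ (Fintype.card ι + 1) ^ k := by
  classical
  calc #(multiIndices ι k) ≤ #(piAntidiag (univ : Finset (Option ι)) k) := card_image_le
    _ ≤ #(univ : Finset (Option ι)) ^ k := card_piAntidiag_le_pow _ _
    _ = (Fintype.card ι + 1) ^ k := by rw [card_univ, Fintype.card_option]

theorem integral_pow_two_mul_mul_exp_neg_mul_sq {b : ℝ} (hb : 0 < b) (a : ℕ) :
    ∫ x : ℝ, x ^ (2 * a) * Real.exp (-b * x ^ 2) =
      (2 * a - 1)‼ / (2 * b) ^ a * √(Real.pi / b) := by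
  have integrand_eq_comp_abs (x : ℝ) : x ^ (2 * a) * Real.exp (-b * x ^ 2) =
      |x| ^ (2 * a : ℝ) * Real.exp (-b * |x| ^ (2 : ℝ)) := by
    rw [Real.rpow_two, sq_abs, ← (even_two_mul a).pow_abs x]
    exact_mod_cast congrArg (· * _) (Real.rpow_natCast |x| (2 * a)).symm
  have rpow_exponent : b ^ (-(2 * a + 1 : ℝ) / 2) = (b ^ a * √b)⁻¹ := by
    rw [show -(2 * a + 1 : ℝ) / 2 = -(a + 1 / 2) by ring, Real.rpow_neg hb.le, Real.rpow_add hb,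
      Real.rpow_natCast, ← Real.sqrt_eq_rpow]
  simp_rw [integrand_eq_comp_abs]
  rw [integral_comp_abs (f := fun y : ℝ => y ^ (2 * a : ℝ) * Real.exp (-b * y ^ (2 : ℝ))),
    integral_rpow_mul_exp_neg_mul_rpow two_pos (by linarith [a.cast_nonneg (α := ℝ)]) hb,
    rpow_exponent, show (2 * a + 1 : ℝ) / 2 = a + 1 / 2 by ring, Real.Gamma_nat_add_half,
    Real.sqrt_div Real.pi_nonneg, mul_pow]
  field_simp

theorem integral_pow_two_mul_gaussianReal (v : ℝ≥0) (a : ℕ) :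
    ∫ x, x ^ (2 * a) ∂gaussianReal 0 v = v ^ a * (2 * a - 1)‼ := by
  rcases eq_or_ne v 0 with rfl | hv
  · cases a <;> simp
  have density_eq (x : ℝ) : gaussianPDFReal 0 v x • x ^ (2 * a) =
      (√(2 * Real.pi * v))⁻¹ * (x ^ (2 * a) * Real.exp (-(2 * v : ℝ)⁻¹ * x ^ 2)) := by
    rw [gaussianPDFReal, smul_eq_mul, sub_zero, neg_div, div_eq_inv_mul, neg_mul]
    ring
  rw [integral_gaussianReal_eq_integral_smul hv]
  simp_rw [density_eq]
  rw [integral_const_mul, integral_pow_two_mul_mul_exp_neg_mul_sq (by positivity),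
    show Real.pi / (2 * v : ℝ)⁻¹ = 2 * Real.pi * v by field_simp,
    show 2 * (2 * v : ℝ)⁻¹ = (v : ℝ)⁻¹ by field_simp, inv_pow]
  field_simp

theorem integrable_pow_gaussianReal_s11 (μ : ℝ) (v : ℝ≥0) (a : ℕ) :
    Integrable (fun x : ℝ => x ^ a) (gaussianReal μ v) :=
  integrable_pow_of_mem_interior_integrableExpSet (X := id) (by simp) a

section StdGaussianPi

variable {ι : Type} [Fintype ι]

instance : IsProbabilityMeasure (stdGaussianPi ι) :=
  inferInstanceAs (IsProbabilityMeasure (Measure.pi fun _ => gaussianReal 0 1))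

theorem memLp_two_prod_pow_stdGaussianPi (α : ι → ℕ) :
    MemLp (fun y : ι → ℝ => ∏ j, y j ^ α j) 2 (stdGaussianPi ι) := by
  rw [memLp_two_iff_integrable_sq (Continuous.aestronglyMeasurable (by fun_prop))]
  simp_rw [← prod_pow, ← pow_mul]
  exact Integrable.fintype_prod (f := fun j x => x ^ (α j * 2))
    fun _ => integrable_pow_gaussianReal_s11 0 1 _

theorem integral_prod_pow_sq_stdGaussianPi (α : ι → ℕ) :
    ∫ y, (∏ j, y j ^ α j) ^ 2 ∂stdGaussianPi ι = ∏ j, ((2 * α j - 1)‼ : ℝ) := by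
  simp_rw [← prod_pow, ← pow_mul, mul_comm _ 2]
  rw [stdGaussianPi, integral_fintype_prod_eq_prod (f := fun j x => x ^ (2 * α j))]
  simp [integral_pow_two_mul_gaussianReal]

theorem variance_prod_pow_stdGaussianPi_le (α : ι → ℕ) :
    Var[fun y : ι → ℝ => ∏ j, y j ^ α j; stdGaussianPi ι] ≤
      ((∑ j, α j) ^ ∑ j, α j : ℕ) :=
  calc Var[fun y : ι → ℝ => ∏ j, y j ^ α j; stdGaussianPi ι]
      ≤ ∫ y, (∏ j, y j ^ α j) ^ 2 ∂stdGaussianPi ι :=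
        variance_le_expectation_sq (memLp_two_prod_pow_stdGaussianPi α).aestronglyMeasurable
    _ = (∏ j, (2 * α j - 1)‼ : ℕ) := by
        rw [integral_prod_pow_sq_stdGaussianPi, Nat.cast_prod]
    _ ≤ (∏ j, α j ^ α j : ℕ) := by
        gcongr with j
        exact doubleFactorial_two_mul_sub_one_le_pow_self (α j)
    _ ≤ ((∑ j, α j) ^ ∑ j, α j : ℕ) := by
        exact_mod_cast prod_pow_self_le_sum_pow_sum univ α

variable (ι) in
theorem sum_variance_prod_pow_stdGaussianPi_le (k : ℕ) :
    ∑ α ∈ multiIndices ι k, Var[fun y : ι → ℝ => ∏ j, y j ^ α j; stdGaussianPi ι] ≤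
      (k * (Fintype.card ι + 1) : ℝ) ^ k :=
  calc ∑ α ∈ multiIndices ι k, Var[fun y : ι → ℝ => ∏ j, y j ^ α j; stdGaussianPi ι]
      ≤ #(multiIndices ι k) • (k : ℝ) ^ k := by
        refine sum_le_card_nsmul _ _ _ fun α hα =>
          (variance_prod_pow_stdGaussianPi_le α).trans ?_
        exact_mod_cast pow_self_mono (mem_multiIndices.1 hα)
    _ ≤ ((Fintype.card ι + 1) ^ k : ℕ) • (k : ℝ) ^ k := by
        gcongr
        exact card_multiIndices_le ι k
    _ = (k * (Fintype.card ι + 1) : ℝ) ^ k := by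
        rw [nsmul_eq_mul, mul_pow, mul_comm]
        push_cast
        rfl

end StdGaussianPi

/-- The empirical mean `(f(x₁) + ⋯ + f(xₘ)) / m` of `f` over a sample `x` of size `m`; it is `0`
for the empty sample. -/
noncomputable def empiricalMean {Ω : Type*} {m : ℕ} (f : Ω → ℝ) (x : Fin m → Ω) : ℝ :=
  (1 / (m : ℝ)) * ∑ i, f (x i)

section EmpiricalMean

variable {Ω : Type*} {mΩ : MeasurableSpace Ω} {P : Measure Ω} [IsProbabilityMeasure P]
  {f : Ω → ℝ} {m : ℕ}

theorem memLp_empiricalMean {p : ENNReal} (hf : MemLp f p P) :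
    MemLp (empiricalMean (m := m) f) p (Measure.pi fun _ => P) :=
  (memLp_finsetSum _ fun i _ =>
    hf.comp_measurePreserving (measurePreserving_eval (fun _ => P) i)).const_mul _

theorem integral_empiricalMean (hf : Integrable f P) (hm : m ≠ 0) :
    ∫ x, empiricalMean (m := m) f x ∂(Measure.pi fun _ => P) = ∫ ω, f ω ∂P := by
  have integral_eval (i : Fin m) :
      ∫ x : Fin m → Ω, f (x i) ∂(Measure.pi fun _ => P) = ∫ ω, f ω ∂P :=
    integral_comp_eval (μ := fun _ => P) hf.aestronglyMeasurable
  simp_rw [empiricalMean]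
  rw [integral_const_mul, integral_finsetSum _ fun i _ => integrable_comp_eval hf]
  simp_rw [integral_eval, sum_const, card_univ, Fintype.card_fin, nsmul_eq_mul]
  field_simp

theorem variance_empiricalMean (hf : MemLp f 2 P) :
    Var[empiricalMean (m := m) f; Measure.pi fun _ => P] = Var[f; P] / m := by
  have variance_sum : Var[fun x : Fin m → Ω => ∑ i, f (x i); Measure.pi fun _ => P] =
      m * Var[f; P] := by
    simpa [Finset.sum_fn] using
      variance_sum_pi (μ := fun _ : Fin m => P) (X := fun _ => f) fun _ => hf
  unfold empiricalMean
  rw [variance_const_mul, variance_sum]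
  field_simp

theorem measure_le_abs_empiricalMean_sub_integral_le (hf : MemLp f 2 P) (hm : m ≠ 0) {ε : ℝ}
    (hε : 0 < ε) :
    Measure.pi (fun _ : Fin m => P) {x | ε ≤ |empiricalMean f x - ∫ ω, f ω ∂P|} ≤
      ENNReal.ofReal (Var[f; P] / (m * ε ^ 2)) := by
  have chebyshev := meas_ge_le_variance_div_sq (memLp_empiricalMean (m := m) hf) hε
  rwa [integral_empiricalMean (hf.integrable one_le_two) hm, variance_empiricalMean hf, div_div]
    at chebyshev

theorem measure_exists_le_abs_empiricalMean_sub_integral_le {A : Type*} {s : Finset A}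
    {g : A → Ω → ℝ} (hg : ∀ a ∈ s, MemLp (g a) 2 P) (hm : m ≠ 0) {ε : ℝ} (hε : 0 < ε) :
    Measure.pi (fun _ : Fin m => P)
        {x | ∃ a ∈ s, ε ≤ |empiricalMean (g a) x - ∫ ω, g a ω ∂P|} ≤
      ENNReal.ofReal ((∑ a ∈ s, Var[g a; P]) / (m * ε ^ 2)) := by
  set bad : A → Set (Fin m → Ω) := fun a => {x | ε ≤ |empiricalMean (g a) x - ∫ ω, g a ω ∂P|}
  calc Measure.pi (fun _ : Fin m => P) {x | ∃ a ∈ s, x ∈ bad a}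
      = Measure.pi (fun _ : Fin m => P) (⋃ a ∈ s, bad a) := by
        congr 1
        ext
        simp
    _ ≤ ∑ a ∈ s, Measure.pi (fun _ : Fin m => P) (bad a) := measure_biUnion_finset_le s bad
    _ ≤ ∑ a ∈ s, ENNReal.ofReal (Var[g a; P] / (m * ε ^ 2)) :=
        sum_le_sum fun a ha => measure_le_abs_empiricalMean_sub_integral_le (hg a ha) hm hε
    _ = ENNReal.ofReal ((∑ a ∈ s, Var[g a; P]) / (m * ε ^ 2)) := by
        rw [sum_div, ENNReal.ofReal_sum_of_nonneg]
        exact fun a _ => div_nonneg (variance_nonneg (g a) P) (by positivity)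

end EmpiricalMean

theorem ofReal_one_sub_le_measure_of_compl_le {Ω : Type*} {mΩ : MeasurableSpace Ω} {P : Measure Ω}
    [IsProbabilityMeasure P] {s : Set Ω} {δ : ℝ} (hδ : 0 ≤ δ) (hs : P sᶜ ≤ ENNReal.ofReal δ) :
    ENNReal.ofReal (1 - δ) ≤ P s := by
  rw [ENNReal.ofReal_sub 1 hδ, ENNReal.ofReal_one, tsub_le_iff_right]
  calc 1 = P Set.univ := measure_univ.symm
    _ ≤ P s + P sᶜ := measure_univ_le_add_compl s
    _ ≤ P s + ENNReal.ofReal δ := by gcongr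

theorem empirical_moments_concentrate_general {ι : Type} [Fintype ι] {k m : ℕ} {δ η : ℝ}
    (hδ : 0 < δ) (hη : 0 < η)
    (hm : (k * (Fintype.card ι + 1) : ℝ) ^ k / (δ * η ^ 2) ≤ m) :
    ENNReal.ofReal (1 - δ) ≤
      Measure.pi (fun _ : Fin m => stdGaussianPi ι)
        {x | ∀ α : ι → ℕ, ∑ j, α j ≤ k →
          |(1 / (m : ℝ)) * ∑ i, ∏ j, x i j ^ α j - ∫ y, ∏ j, y j ^ α j ∂stdGaussianPi ι| ≤ η} := by
  have bound_pos : 0 < (k * (Fintype.card ι + 1) : ℝ) ^ k := by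
    rcases k.eq_zero_or_pos with rfl | hk
    · simp
    · positivity
  have hm_pos : 0 < (m : ℝ) := lt_of_lt_of_le (by positivity) hm
  have failure_le := measure_exists_le_abs_empiricalMean_sub_integral_le (P := stdGaussianPi ι)
    (s := multiIndices ι k) (fun α _ => memLp_two_prod_pow_stdGaussianPi α)
    (Nat.cast_pos.1 hm_pos).ne' hη
  refine ofReal_one_sub_le_measure_of_compl_le hδ.le
    ((measure_mono fun x hx => ?_).trans (failure_le.trans (ENNReal.ofReal_le_ofReal ?_)))
  · simp only [Set.mem_compl_iff, Set.mem_ofPred_eq, not_forall, not_le] at hx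
    obtain ⟨α, degree_le, deviation⟩ := hx
    exact ⟨α, mem_multiIndices.2 degree_le, deviation.le⟩
  · rw [div_le_iff₀ (by positivity)] at hm ⊢
    linarith [sum_variance_prod_pow_stdGaussianPi_le ι k]

theorem empirical_moments_concentrate :
    ∃ c : ℝ, 0 < c ∧
      ∀ (n k : ℕ), 1 ≤ n → 1 ≤ k →
      ∀ η : ℝ, η ∈ Set.Ioo (0 : ℝ) 1 →
      ∀ m : ℕ, c * ((2 * k * n : ℕ) : ℝ) ^ k / η ^ 2 ≤ (m : ℝ) →
        ENNReal.ofReal 0.99 ≤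
          Measure.pi (fun _ : Fin m => stdGaussianPi (Fin n))
            {x | ∀ α : Fin n → ℕ, (∑ j, α j) ≤ k →
              |(1 / (m : ℝ)) * ∑ i, ∏ j, (x i j) ^ α j -
                ∫ y, ∏ j, (y j) ^ α j ∂(stdGaussianPi (Fin n))| ≤ η} := by
  refine ⟨100, by norm_num, fun n k hn _ η ⟨hη, _⟩ m hm => ?_⟩
  have base_le : (k * (n + 1) : ℝ) ≤ (2 * k * n : ℕ) := by
    exact_mod_cast (by nlinarith : k * (n + 1) ≤ 2 * k * n)
  rw [show (0.99 : ℝ) = 1 - 1 / 100 by norm_num]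
  refine empirical_moments_concentrate_general (by norm_num) hη (le_trans ?_ hm)
  rw [Fintype.card_fin]
  calc (k * (n + 1) : ℝ) ^ k / (1 / 100 * η ^ 2) = 100 * (k * (n + 1) : ℝ) ^ k / η ^ 2 := by
        field_simp
    _ ≤ 100 * ((2 * k * n : ℕ) : ℝ) ^ k / η ^ 2 := by gcongr
end
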